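/- There exists an absolute constant K > 0 such that the following holds. Let q = ψ' + ψ² with ψ ∈ 𝒜(I_π) of the form ψ = f + g/2, where f ∈ 𝒜(I_π) with dom(f) = I_d (d ≤ π), and g = −(log h)' on I_d for some (1/m)-concave function h which is affine on an interval [a,b] with I_{π/4} ⊆ [a,b] ⊆ I_d. If λ₁(I_d, q) ≤ 7, then λ₁(I_d, q) ≥ 3 + (8K/(mπ²)) · [1 − min{h(a),h(b)}/max{h(a),h(b)}]². -/

import Mathlib

open MeasureTheory Real Set Filter
open scoped ENNReal

noncomputable section

/-- Test class for the Dirichlet eigenvalue with measure potential on `(a,b)`: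
`C¹` functions vanishing outside the open interval (a core of `H¹₀`). -/
def TestFun (a b : ℝ) (v : ℝ → ℝ) : Prop :=
  ContDiff ℝ 1 v ∧ ∀ x ∉ Ioo a b, v x = 0

/-- Rayleigh quotient for the Dirichlet eigenvalue with (nonnegative, possibly infinite)
measure potential `q` on the interval `(a,b)`. -/
def dirRQ (a b : ℝ) (q : Measure ℝ) (v : ℝ → ℝ) : ℝ≥0∞ :=
  ((∫⁻ x in Ioo a b, ENNReal.ofReal ((deriv v x) ^ 2)) +
      ∫⁻ x in Ioo a b, ENNReal.ofReal ((v x) ^ 2) ∂q) /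
    ∫⁻ x in Ioo a b, ENNReal.ofReal ((v x) ^ 2)

/-- `λ₁((a,b), q)`, the first Dirichlet eigenvalue with measure potential `q`. -/
def lam1 (a b : ℝ) (q : Measure ℝ) : ℝ≥0∞ :=
  ⨅ (v : ℝ → ℝ)
    (_ : TestFun a b v ∧ (∫⁻ x in Ioo a b, ENNReal.ofReal ((v x) ^ 2)) ≠ 0),
    dirRQ a b q v

/-- The class `𝒜(I_π)`: an increasing function `psi` with finiteness domain `dom ⊆ I_π`
(an interval), satisfying the improved-monotonicity gap condition, together with the
measure `nu` representing its distributional derivative `ψ'` on `dom`. -/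
structure PsiA where
  dom : Set ℝ
  domSub : dom ⊆ Ioo (-(π / 2)) (π / 2)
  domConn : dom.OrdConnected
  psi : ℝ → ℝ
  mono : MonotoneOn psi dom
  gap : ∀ ⦃x⦄, x ∈ dom → ∀ ⦃y⦄, y ∈ dom → x < y →
    2 * tan ((y - x) / 2) ≤ psi y - psi x
  nu : Measure ℝ
  nu_eq : ∀ ⦃x⦄, x ∈ dom → ∀ ⦃y⦄, y ∈ dom → x ≤ y →
    nu (Ioc x y) = ENNReal.ofReal (psi y - psi x)

/-- The measure `ψ'`, extended by `+∞` on `I_π \ dom ψ`. -/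
def PsiA.derivM (P : PsiA) : Measure ℝ :=
  P.nu.restrict P.dom + (∞ : ℝ≥0∞) • volume.restrict (Ioo (-(π / 2)) (π / 2) \ P.dom)

/-- The measure `ψ² dx`, extended by `+∞` on `I_π \ dom ψ`. -/
def PsiA.sqM (P : PsiA) : Measure ℝ :=
  (volume.restrict P.dom).withDensity (fun x => ENNReal.ofReal ((P.psi x) ^ 2)) +
    (∞ : ℝ≥0∞) • volume.restrict (Ioo (-(π / 2)) (π / 2) \ P.dom)

/-- The measure `q = ψ' + ψ²`, extended by `+∞` on `I_π \ dom ψ`. -/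
def PsiA.qM (P : PsiA) : Measure ℝ :=
  P.nu.restrict P.dom +
    (volume.restrict P.dom).withDensity (fun x => ENNReal.ofReal ((P.psi x) ^ 2)) +
    (∞ : ℝ≥0∞) • volume.restrict (Ioo (-(π / 2)) (π / 2) \ P.dom)

/-- The function `cos² x` on `I_π`, extended by zero. -/
def cosSq : ℝ → ℝ := fun x => if x ∈ Ioo (-(π / 2)) (π / 2) then cos x ^ 2 else 0

/-- The measure with density `1 + 2 tan² x` on `I_π`. -/
def tanWeight : Measure ℝ :=
  (volume.restrict (Ioo (-(π / 2)) (π / 2))).withDensity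
    fun x => ENNReal.ofReal (1 + 2 * tan x ^ 2)

/-!
If `ψ y - ψ x ≥ ω ((y - x) / 2)`, then the oscillation `w y - w x` of a solution of
`w'' - 2 ψ w' + μ w = 0` with `w' = 0` at both ends of an interval cannot touch from below a
positive increasing strict supersolution `F ((y - x) / 2)` of `F'' - ω F' + μ F = 0`. Such a `w`
is therefore decreasing, which makes the derivative of the solution with `w = -1`, `w' = 0` at the
left end positive from there on. Picone's identity with weight `μ w / w'` then gives
`μ ∫ v² ≤ ∫ (v' - ψ v)²` for `v` vanishing at the ends, first for continuous `ψ` and, by Steklov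
averaging (which preserves `ω`), for monotone `ψ`. Expanding the square and integrating
`-2 ψ v v'` by parts turns the right-hand side into `∫ v'² + ∫ v² d(ψ' + ψ²)`, that is, `λ₁ ≥ μ`.

For `ω t = 2 tan t` the choice `F = sin` is a supersolution exactly up to `μ = 3`. Where `h` is
affine, `-(log h)'` increases by an amount controlled by the ratio of `h a` and `h b`, and
log-concavity spreads this gain to all pairs at distance at least `6 / 5`: there `ω` exceeds
`2 tan t` by a constant, and a perturbation of `sin t` by cubic and quintic terms in `sin t` raises
`μ` above `3`.
-/

section GlobalExistence

variable {E : Type*} [NormedAddCommGroup E] [NormedSpace ℝ E]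

/-- The radial retraction of a normed space onto the closed ball of radius `r` around `0`,
used to truncate vector fields of linear growth to bounded ones. -/
def radialRetraction (r : ℝ) (x : E) : E :=
  (r / max r ‖x‖) • x

lemma radialRetraction_of_norm_le {r : ℝ} {x : E} (hr : 0 < r) (hx : ‖x‖ ≤ r) :
    radialRetraction r x = x := by
  rw [radialRetraction, max_eq_left hx, div_self hr.ne', one_smul]

lemma norm_radialRetraction {r : ℝ} (hr : 0 < r) (x : E) :
    ‖radialRetraction r x‖ = r / max r ‖x‖ * ‖x‖ := by
  rw [radialRetraction, norm_smul, Real.norm_of_nonneg (by positivity)]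

lemma norm_radialRetraction_le_radius {r : ℝ} (hr : 0 < r) (x : E) :
    ‖radialRetraction r x‖ ≤ r := by
  rw [norm_radialRetraction hr, div_mul_eq_mul_div, div_le_iff₀ (by positivity)]
  gcongr
  exact le_max_right _ _

lemma norm_radialRetraction_le {r : ℝ} (hr : 0 < r) (x : E) :
    ‖radialRetraction r x‖ ≤ ‖x‖ := by
  rw [norm_radialRetraction hr]
  exact mul_le_of_le_one_left (norm_nonneg x) (div_le_one_of_le₀ (le_max_left _ _) (by positivity))

lemma lipschitzWith_radialRetraction {r : ℝ} (hr : 0 < r) :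
    LipschitzWith 2 (radialRetraction r : E → E) := by
  refine LipschitzWith.of_dist_le_mul fun x y => ?_
  have hx : 0 < max r ‖x‖ := by positivity
  have hy : 0 < max r ‖y‖ := by positivity
  have hscale : |max r ‖y‖ - max r ‖x‖| ≤ ‖x - y‖ :=
    (abs_max_sub_max_le_max _ _ _ _).trans <| by
      rw [sub_self, abs_zero, max_eq_right (abs_nonneg _), abs_sub_comm]
      exact abs_norm_sub_norm_le x y
  have hfactor : ‖(r / max r ‖x‖ - r / max r ‖y‖) • y‖ ≤ ‖x - y‖ := by
    have hsplit : r / max r ‖x‖ - r / max r ‖y‖ =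
        (r / max r ‖x‖) * ((max r ‖y‖ - max r ‖x‖) / max r ‖y‖) := by field_simp
    have hy1 : ‖y‖ / max r ‖y‖ ≤ 1 := div_le_one_of_le₀ (le_max_right _ _) hy.le
    have hx1 : r / max r ‖x‖ ≤ 1 := div_le_one_of_le₀ (le_max_left _ _) hx.le
    calc ‖(r / max r ‖x‖ - r / max r ‖y‖) • y‖
        = r / max r ‖x‖ * |max r ‖y‖ - max r ‖x‖| * (‖y‖ / max r ‖y‖) := by
          rw [norm_smul, hsplit, Real.norm_eq_abs, abs_mul, abs_div, abs_div, abs_of_pos hr,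
            abs_of_pos hx, abs_of_pos hy]
          ring
      _ ≤ 1 * ‖x - y‖ * 1 := by gcongr
      _ = ‖x - y‖ := by ring
  calc dist (radialRetraction r x) (radialRetraction r y)
      = ‖(r / max r ‖x‖) • (x - y) + (r / max r ‖x‖ - r / max r ‖y‖) • y‖ := by
        rw [dist_eq_norm, radialRetraction, radialRetraction]
        congr 1
        module
    _ ≤ ‖(r / max r ‖x‖) • (x - y)‖ + ‖x - y‖ := (norm_add_le _ _).trans (by gcongr)
    _ ≤ 1 * ‖x - y‖ + ‖x - y‖ := by
        rw [norm_smul, Real.norm_of_nonneg (div_pos hr hx).le]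
        gcongr
        exact div_le_one_of_le₀ (le_max_left _ _) hx.le
    _ = (2 : NNReal) * dist x y := by rw [dist_eq_norm, NNReal.coe_ofNat]; ring

variable [CompleteSpace E]

theorem exists_forall_mem_Icc_hasDerivWithinAt_of_norm_le {f : ℝ → E → E} {a b : ℝ} {K L : NNReal}
    (hab : a ≤ b) (hf : ∀ t ∈ Icc a b, LipschitzWith K (f t))
    (hcont : ∀ x, ContinuousOn (fun t => f t x) (Icc a b))
    (hbound : ∀ t ∈ Icc a b, ∀ x, ‖f t x‖ ≤ L) (x₀ : E) :
    ∃ y : ℝ → E, y a = x₀ ∧ ∀ t ∈ Icc a b, HasDerivWithinAt y (f t (y t)) (Icc a b) t := by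
  have hPicard : IsPicardLindelof f (⟨a, left_mem_Icc.2 hab⟩ : Icc a b) x₀
      (L * (b - a).toNNReal) 0 L K :=
    { lipschitzOnWith := fun t ht => (hf t ht).lipschitzOnWith
      continuousOn := fun x _ => hcont x
      norm_le := fun t ht x _ => hbound t ht x
      mul_max_le := by simp [hab] }
  exact hPicard.exists_eq_forall_mem_Icc_hasDerivWithinAt₀

theorem exists_forall_mem_Icc_hasDerivWithinAt_of_lipschitzWith {f : ℝ → E → E} {a b : ℝ}
    {K : NNReal} (hab : a ≤ b) (hf : ∀ t ∈ Icc a b, LipschitzWith K (f t))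
    (hcont : ∀ x, ContinuousOn (fun t => f t x) (Icc a b)) (x₀ : E) :
    ∃ y : ℝ → E, y a = x₀ ∧ ∀ t ∈ Icc a b, HasDerivWithinAt y (f t (y t)) (Icc a b) t := by
  obtain ⟨C, hC⟩ := isCompact_Icc.exists_bound_of_continuousOn (hcont 0)
  have hC0 : 0 ≤ C := (norm_nonneg _).trans (hC a (left_mem_Icc.2 hab))
  have hgrowth : ∀ t ∈ Icc a b, ∀ x, ‖f t x‖ ≤ K * ‖x‖ + C := fun t ht x =>
    calc ‖f t x‖ ≤ ‖f t x - f t 0‖ + ‖f t 0‖ := by simpa using norm_add_le (f t x - f t 0) (f t 0)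
      _ ≤ K * ‖x‖ + C := by
        have hLip := (hf t ht).norm_sub_le x 0
        rw [sub_zero] at hLip
        exact add_le_add hLip (hC t ht)
  set r : ℝ := max 1 (gronwallBound ‖x₀‖ K C (b - a))
  have hr : 0 < r := one_pos.trans_le (le_max_left _ _)
  obtain ⟨y, hya, hy⟩ := exists_forall_mem_Icc_hasDerivWithinAt_of_norm_le
    (f := fun t x => f t (radialRetraction r x)) (L := K * r.toNNReal + C.toNNReal) hab
    (fun t ht => (hf t ht).comp (lipschitzWith_radialRetraction hr)) (fun x => hcont _)
    (fun t ht x => (hgrowth t ht _).trans <| by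
      push_cast [Real.coe_toNNReal _ hr.le, Real.coe_toNNReal _ hC0]
      gcongr
      exact norm_radialRetraction_le_radius hr x) x₀
  have hgronwall : ∀ t ∈ Icc a b, ‖y t‖ ≤ r := fun t ht =>
    calc ‖y t‖ ≤ gronwallBound ‖x₀‖ K C (t - a) :=
          norm_le_gronwallBound_of_norm_deriv_right_le
            (fun s hs => (hy s hs).continuousWithinAt)
            (fun s hs => (hy s (Ico_subset_Icc_self hs)).mono_of_mem_nhdsWithin
              (Icc_mem_nhdsGE_of_mem hs))
            (by rw [hya])
            (fun s hs => (hgrowth s (Ico_subset_Icc_self hs) _).trans <| by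
              gcongr
              exact norm_radialRetraction_le hr _) t ht
      _ ≤ gronwallBound ‖x₀‖ K C (b - a) :=
          gronwallBound_mono (norm_nonneg _) hC0 K.2 (by linarith [ht.2])
      _ ≤ r := le_max_right _ _
  refine ⟨y, hya, fun t ht => ?_⟩
  simpa only [radialRetraction_of_norm_le hr (hgronwall t ht)] using hy t ht

end GlobalExistence

section SecondOrder

lemma second_deriv_nonpos_of_isLocalMax {f f' : ℝ → ℝ} {x f'' : ℝ}
    (hf : ∀ᶠ t in nhds x, HasDerivAt f (f' t) t) (hf' : HasDerivAt f' f'' x)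
    (hmax : IsLocalMax f x) : f'' ≤ 0 := by
  by_contra! hpos
  have hderiv : deriv f =ᶠ[nhds x] f' := hf.mono fun t ht => ht.deriv
  have hderiv2 : deriv (deriv f) x = f'' := by rw [hderiv.deriv_eq, hf'.deriv]
  have hmin : IsLocalMin f x :=
    isLocalMin_of_deriv_deriv_pos (hderiv2 ▸ hpos) hmax.deriv_eq_zero hf.self_of_nhds.continuousAt
  have hconst : f =ᶠ[nhds x] fun _ => f x := by
    filter_upwards [hmax, hmin] with t h₁ h₂ using le_antisymm h₁ h₂
  have hzero : deriv (deriv f) x = 0 := by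
    have : deriv f =ᶠ[nhds x] fun _ => 0 := by simpa using hconst.deriv
    rw [this.deriv_eq, deriv_const]
  exact hpos.ne' (hderiv2.symm.trans hzero)

lemma mul_sub_nonpos_of_isMaxOn {f : ℝ → ℝ} {s : Set ℝ} {x y f' : ℝ} (hs : Convex ℝ s)
    (hmax : IsMaxOn f s x) (hf : HasDerivWithinAt f f' s x) (hx : x ∈ s) (hy : y ∈ s) :
    (y - x) * f' ≤ 0 := by
  simpa using hmax.localize.hasFDerivWithinAt_nonpos hf.hasFDerivWithinAt
    (sub_mem_posTangentConeAt_of_segment_subset (hs.segment_subset hx hy))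

end SecondOrder

section TwoPoint

/-- The improved-monotonicity condition `ω ((y - x) / 2) ≤ ψ y - ψ x` for `x < y` in `s`: the
function `ω` is a modulus of expansion of `ψ`, parametrised by the half-distance. -/
def IsModulusOfExpansion (ω ψ : ℝ → ℝ) (s : Set ℝ) : Prop :=
  ∀ ⦃x⦄, x ∈ s → ∀ ⦃y⦄, y ∈ s → x < y → ω ((y - x) / 2) ≤ ψ y - ψ x

lemma IsModulusOfExpansion.mono {ω ψ : ℝ → ℝ} {s t : Set ℝ} (h : IsModulusOfExpansion ω ψ s)
    (hts : t ⊆ s) : IsModulusOfExpansion ω ψ t :=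
  fun _ hx _ hy hxy => h (hts hx) (hts hy) hxy

/-- The pair `w`, `p = w'` solves the linear equation `w'' - 2 ψ w' + μ w = 0` on `[α, β]`. -/
structure IsDriftSolution (ψ : ℝ → ℝ) (μ α β : ℝ) (w p : ℝ → ℝ) : Prop where
  hasDerivWithinAt : ∀ t ∈ Icc α β, HasDerivWithinAt w (p t) (Icc α β) t
  hasDerivWithinAt_deriv : ∀ t ∈ Icc α β,
    HasDerivWithinAt p (2 * ψ t * p t - μ * w t) (Icc α β) t

namespace IsDriftSolution

variable {ψ w p : ℝ → ℝ} {μ α β : ℝ}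

lemma mono (h : IsDriftSolution ψ μ α β w p) {α' β' : ℝ} (hα : α ≤ α') (hβ : β' ≤ β) :
    IsDriftSolution ψ μ α' β' w p :=
  have hsub : Icc α' β' ⊆ Icc α β := Icc_subset_Icc hα hβ
  ⟨fun t ht => (h.hasDerivWithinAt t (hsub ht)).mono hsub,
    fun t ht => (h.hasDerivWithinAt_deriv t (hsub ht)).mono hsub⟩

lemma continuousOn (h : IsDriftSolution ψ μ α β w p) : ContinuousOn w (Icc α β) :=
  fun t ht => (h.hasDerivWithinAt t ht).continuousWithinAt

lemma continuousOn_deriv (h : IsDriftSolution ψ μ α β w p) : ContinuousOn p (Icc α β) :=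
  fun t ht => (h.hasDerivWithinAt_deriv t ht).continuousWithinAt

lemma hasDerivAt (h : IsDriftSolution ψ μ α β w p) {t : ℝ} (ht : t ∈ Ioo α β) :
    HasDerivAt w (p t) t :=
  (h.hasDerivWithinAt t (Ioo_subset_Icc_self ht)).hasDerivAt (Icc_mem_nhds ht.1 ht.2)

lemma hasDerivAt_deriv (h : IsDriftSolution ψ μ α β w p) {t : ℝ} (ht : t ∈ Ioo α β) :
    HasDerivAt p (2 * ψ t * p t - μ * w t) t :=
  (h.hasDerivWithinAt_deriv t (Ioo_subset_Icc_self ht)).hasDerivAt (Icc_mem_nhds ht.1 ht.2)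

end IsDriftSolution

/-- `F` (with first and second derivatives `F'`, `F''`) is a positive increasing strict
supersolution on `(0, T)` of the equation `F'' - ω F' + μ F = 0` satisfied by the two-point
oscillation of solutions of `w'' - 2 ψ w' + μ w = 0`. -/
structure IsStrictBarrier (ω : ℝ → ℝ) (μ T : ℝ) (F F' F'' : ℝ → ℝ) : Prop where
  hasDerivAt : ∀ t, HasDerivAt F (F' t) t
  hasDerivAt_deriv : ∀ t, HasDerivAt F' (F'' t) t
  pos : ∀ t, 0 ≤ t → t < T → 0 < F t
  deriv_pos : ∀ t, 0 < t → t < T → 0 < F' t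
  strict : ∀ t, 0 < t → t < T → F'' t - ω t * F' t + μ * F t < 0

/-- The two-point function `w y' - w x' - Q F ((y' - x') / 2)` on `α ≤ x' ≤ y' ≤ β` is nonpositive
and vanishes at `(x, y)`, where `x < y`. -/
structure IsTouchingPair (w F : ℝ → ℝ) (Q α β x y : ℝ) : Prop where
  left_le : α ≤ x
  lt : x < y
  le_right : y ≤ β
  eq : w y - w x = Q * F ((y - x) / 2)
  le : ∀ x' y', α ≤ x' → x' ≤ y' → y' ≤ β → w y' - w x' ≤ Q * F ((y' - x') / 2)

lemma exists_isTouchingPair {w F : ℝ → ℝ} {α β : ℝ} (hw : ContinuousOn w (Icc α β))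
    (hF : Continuous F) (hpos : ∀ t, 0 ≤ t → t ≤ (β - α) / 2 → 0 < F t)
    (hanti : ¬AntitoneOn w (Icc α β)) :
    ∃ Q x y, 0 < Q ∧ IsTouchingPair w F Q α β x y := by
  set S : Set (ℝ × ℝ) := (Icc α β ×ˢ Icc α β) ∩ {z | z.1 ≤ z.2}
  have hS : IsCompact S := (isCompact_Icc.prod isCompact_Icc).inter_right
    (isClosed_le continuous_fst continuous_snd)
  have hFpos : ∀ z ∈ S, 0 < F ((z.2 - z.1) / 2) := fun z hz =>
    hpos _ (by linarith [hz.2.out]) (by linarith [hz.1.1.1, hz.1.2.2])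
  have hcont : ContinuousOn (fun z : ℝ × ℝ => (w z.2 - w z.1) / F ((z.2 - z.1) / 2)) S :=
    ((hw.comp continuousOn_snd fun z hz => hz.1.2).sub
      (hw.comp continuousOn_fst fun z hz => hz.1.1)).div (by fun_prop) fun z hz => (hFpos z hz).ne'
  obtain ⟨x₁, hx₁, y₁, hy₁, hxy₁, hw₁⟩ :
      ∃ x ∈ Icc α β, ∃ y ∈ Icc α β, x ≤ y ∧ w x < w y := by
    simpa [AntitoneOn, and_assoc] using hanti
  have hmem₁ : (x₁, y₁) ∈ S := ⟨⟨hx₁, hy₁⟩, hxy₁⟩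
  obtain ⟨⟨x, y⟩, hmem, hmax⟩ := hS.exists_isMaxOn ⟨_, hmem₁⟩ hcont
  set Q := (w y - w x) / F ((y - x) / 2) with hQ
  have hQpos : 0 < Q :=
    (div_pos (sub_pos.2 hw₁) (hFpos _ hmem₁)).trans_le (hmax hmem₁)
  have heq : w y - w x = Q * F ((y - x) / 2) := (div_mul_cancel₀ _ (hFpos _ hmem).ne').symm
  have hne : x ≠ y := by
    rintro rfl
    exact (mul_pos hQpos (hFpos _ hmem)).ne' (by simpa using heq.symm)
  refine ⟨Q, x, y, hQpos, hmem.1.1.1, hmem.2.out.lt_of_ne hne, hmem.1.2.2, heq,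
    fun x' y' hx' hxy' hy' => ?_⟩
  have hmem' : (x', y') ∈ S := ⟨⟨⟨hx', hxy'.trans hy'⟩, hx'.trans hxy', hy'⟩, hxy'⟩
  exact (div_le_iff₀ (hFpos _ hmem')).1 (hmax hmem')

namespace IsTouchingPair

variable {ψ w p F F' F'' : ℝ → ℝ} {Q α β x y μ F₁ : ℝ}

lemma right_deriv_eq (h : IsTouchingPair w F Q α β x y) (hQ : 0 < Q)
    (hw : HasDerivWithinAt w (p y) (Icc α β) y) (hF : HasDerivAt F F₁ ((y - x) / 2))
    (hF₁ : 0 < F₁) (hβ : p β = 0) : y < β ∧ p y = Q * F₁ / 2 := by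
  have hderiv : HasDerivWithinAt (fun y' => w y' - w x - Q * F ((y' - x) / 2))
      (p y - Q * (F₁ * (1 / 2))) (Icc x β) y :=
    ((hw.mono (Icc_subset_Icc_left h.left_le)).sub_const _).sub
      ((hF.comp y (((hasDerivAt_id y).sub_const x).div_const 2)).const_mul Q).hasDerivWithinAt
  have hmax : IsMaxOn (fun y' => w y' - w x - Q * F ((y' - x) / 2)) (Icc x β) y := fun y' hy' => by
    have := h.le x y' h.left_le hy'.1 hy'.2
    have := h.eq
    simp only [mem_ofPred_eq]
    linarith
  have hfermat : ∀ y' ∈ Icc x β, (y' - y) * (p y - Q * (F₁ * (1 / 2))) ≤ 0 := fun y' =>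
    mul_sub_nonpos_of_isMaxOn (convex_Icc x β) hmax hderiv ⟨h.lt.le, h.le_right⟩
  have hge : Q * F₁ / 2 ≤ p y := by
    nlinarith [hfermat x (left_mem_Icc.2 (h.lt.le.trans h.le_right)), h.lt]
  have hlt : y < β := h.le_right.lt_of_ne fun heq => by
    rw [heq, hβ] at hge
    linarith [mul_pos hQ hF₁]
  exact ⟨hlt, le_antisymm
    (by nlinarith [hfermat β (right_mem_Icc.2 (h.lt.le.trans h.le_right))]) hge⟩

lemma left_deriv_eq (h : IsTouchingPair w F Q α β x y) (hQ : 0 < Q)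
    (hw : HasDerivWithinAt w (p x) (Icc α β) x) (hF : HasDerivAt F F₁ ((y - x) / 2))
    (hF₁ : 0 < F₁) (hα : p α = 0) : α < x ∧ p x = Q * F₁ / 2 := by
  have hderiv : HasDerivWithinAt (fun x' => w y - w x' - Q * F ((y - x') / 2))
      (-p x - Q * (F₁ * (-1 / 2))) (Icc α y) x :=
    ((hw.mono (Icc_subset_Icc_right h.le_right)).const_sub _).sub
      ((hF.comp x (((hasDerivAt_id x).const_sub y).div_const 2)).const_mul Q).hasDerivWithinAt
  have hmax : IsMaxOn (fun x' => w y - w x' - Q * F ((y - x') / 2)) (Icc α y) x := fun x' hx' => by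
    have := h.le x' y hx'.1 hx'.2 h.le_right
    have := h.eq
    simp only [mem_ofPred_eq]
    linarith
  have hfermat : ∀ x' ∈ Icc α y, (x' - x) * (-p x - Q * (F₁ * (-1 / 2))) ≤ 0 := fun x' =>
    mul_sub_nonpos_of_isMaxOn (convex_Icc α y) hmax hderiv ⟨h.left_le, h.lt.le⟩
  have hge : Q * F₁ / 2 ≤ p x := by
    nlinarith [hfermat y (right_mem_Icc.2 (h.left_le.trans h.lt.le)), h.lt]
  have hlt : α < x := h.left_le.lt_of_ne fun heq => by
    rw [← heq, hα] at hge
    linarith [mul_pos hQ hF₁]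
  exact ⟨hlt, le_antisymm
    (by nlinarith [hfermat α (left_mem_Icc.2 (h.left_le.trans h.lt.le))]) hge⟩

/-- Second-order condition along the antidiagonal `r ↦ (x - r, y + r)`. -/
lemma second_order (h : IsTouchingPair w F Q α β x y) (hα : α < x) (hβ : y < β)
    (hw : IsDriftSolution ψ μ α β w p) (hF : ∀ t, HasDerivAt F (F' t) t)
    (hF' : ∀ t, HasDerivAt F' (F'' t) t) :
    (2 * ψ y * p y - μ * w y) - (2 * ψ x * p x - μ * w x) - Q * F'' ((y - x) / 2) ≤ 0 := by
  set t := (y - x) / 2 with ht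
  have hx : x ∈ Ioo α β := ⟨hα, h.lt.trans hβ⟩
  have hy : y ∈ Ioo α β := ⟨hα.trans h.lt, hβ⟩
  have hnear : ∀ᶠ r in nhds (0 : ℝ), y + r ∈ Ioo α β ∧ x - r ∈ Ioo α β ∧ x - r ≤ y + r := by
    have hy0 : Tendsto (fun r => y + r) (nhds 0) (nhds y) :=
      (by fun_prop : Continuous fun r => y + r).tendsto' 0 y (add_zero y)
    have hx0 : Tendsto (fun r => x - r) (nhds 0) (nhds x) :=
      (by fun_prop : Continuous fun r => x - r).tendsto' 0 x (sub_zero x)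
    filter_upwards [hy0 (Ioo_mem_nhds hy.1 hy.2), hx0 (Ioo_mem_nhds hx.1 hx.2),
      hx0.eventually_lt hy0 h.lt] with r h₁ h₂ h₃ using ⟨h₁, h₂, h₃.le⟩
  refine second_deriv_nonpos_of_isLocalMax (x := 0)
    (f := fun r => w (y + r) - w (x - r) - Q * F (t + r))
    (f' := fun r => p (y + r) + p (x - r) - Q * F' (t + r)) ?_ ?_ ?_
  · filter_upwards [hnear] with r ⟨hyr, hxr, _⟩
    refine ((((hw.hasDerivAt hyr).comp_const_add y r).sub
      ((hw.hasDerivAt hxr).comp_const_sub x r)).sub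
      (((hF (t + r)).comp_const_add t r).const_mul Q)).congr_deriv ?_
    ring
  · have hpy := (add_zero y).symm ▸ hw.hasDerivAt_deriv hy
    have hpx := (sub_zero x).symm ▸ hw.hasDerivAt_deriv hx
    have hFt := (add_zero t).symm ▸ hF' t
    refine (((HasDerivAt.comp_const_add y 0 hpy).add (HasDerivAt.comp_const_sub x 0 hpx)).sub
      ((HasDerivAt.comp_const_add t 0 hFt).const_mul Q)).congr_deriv ?_
    simp only [add_zero, sub_zero]
    ring
  · filter_upwards [hnear] with r ⟨hyr, hxr, hle⟩
    have hr := h.le (x - r) (y + r) hxr.1.le hle hyr.2.le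
    rw [show (y + r - (x - r)) / 2 = t + r by rw [ht]; ring] at hr
    simp only [add_zero, sub_zero]
    linarith [h.eq]

end IsTouchingPair

theorem IsStrictBarrier.antitoneOn {ω ψ w p F F' F'' : ℝ → ℝ} {μ T α β : ℝ}
    (hF : IsStrictBarrier ω μ T F F' F'') (hT : β - α < 2 * T)
    (hψ : IsModulusOfExpansion ω ψ (Icc α β)) (hw : IsDriftSolution ψ μ α β w p)
    (hα : p α = 0) (hβ : p β = 0) : AntitoneOn w (Icc α β) := by
  by_contra hanti
  obtain ⟨Q, x, y, hQ, h⟩ := exists_isTouchingPair hw.continuousOn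
    (continuous_iff_continuousAt.2 fun t => (hF.hasDerivAt t).continuousAt)
    (fun t ht htT => hF.pos t ht (by linarith)) hanti
  have hx : x ∈ Icc α β := ⟨h.left_le, h.lt.le.trans h.le_right⟩
  have hy : y ∈ Icc α β := ⟨h.left_le.trans h.lt.le, h.le_right⟩
  set t := (y - x) / 2 with ht
  have ht0 : 0 < t := by linarith [h.lt]
  have htT : t < T := by linarith [h.left_le, h.le_right]
  have hF't := hF.deriv_pos t ht0 htT
  obtain ⟨hyβ, hpy⟩ := h.right_deriv_eq hQ (hw.hasDerivWithinAt y hy) (hF.hasDerivAt t) hF't hβ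
  obtain ⟨hαx, hpx⟩ := h.left_deriv_eq hQ (hw.hasDerivWithinAt x hx) (hF.hasDerivAt t) hF't hα
  have hsecond := h.second_order hαx hyβ hw hF.hasDerivAt hF.hasDerivAt_deriv
  rw [hpx, hpy] at hsecond
  have hgap : ω t * (Q * F' t) ≤ (ψ y - ψ x) * (Q * F' t) :=
    mul_le_mul_of_nonneg_right (hψ hx hy h.lt) (mul_pos hQ hF't).le
  have hstrict : Q * (F'' t - ω t * F' t + μ * F t) < 0 :=
    mul_neg_of_pos_of_neg hQ (hF.strict t ht0 htT)
  have htouch : μ * (w y - w x) = μ * (Q * F t) := by rw [h.eq]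
  linarith

end TwoPoint

section Picone

lemma exists_isDriftSolution {ψ : ℝ → ℝ} {α β : ℝ} (hαβ : α ≤ β) (hψ : ContinuousOn ψ (Icc α β))
    (μ w₀ p₀ : ℝ) : ∃ w p, IsDriftSolution ψ μ α β w p ∧ w α = w₀ ∧ p α = p₀ := by
  obtain ⟨B, hB⟩ := isCompact_Icc.exists_bound_of_continuousOn hψ
  set f : ℝ → ℝ × ℝ → ℝ × ℝ := fun t x => (x.2, 2 * ψ t * x.2 - μ * x.1)
  have hLip : ∀ t ∈ Icc α β, LipschitzWith (1 + 2 * B + |μ|).toNNReal (f t) := fun t ht => by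
    refine LipschitzWith.of_dist_le' fun x y => ?_
    have hfst : |x.1 - y.1| ≤ dist x y := le_max_left _ _
    have hsnd : |x.2 - y.2| ≤ dist x y := le_max_right _ _
    have hψt : |ψ t| ≤ B := hB t ht
    have hB0 : 0 ≤ B := (abs_nonneg _).trans hψt
    refine max_le ?_ ?_
    · calc |x.2 - y.2| ≤ 1 * dist x y := by rwa [one_mul]
        _ ≤ (1 + 2 * B + |μ|) * dist x y := by gcongr; linarith [abs_nonneg μ]
    · calc |2 * ψ t * x.2 - μ * x.1 - (2 * ψ t * y.2 - μ * y.1)|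
          = |2 * ψ t * (x.2 - y.2) - μ * (x.1 - y.1)| := by ring_nf
        _ ≤ 2 * |ψ t| * |x.2 - y.2| + |μ| * |x.1 - y.1| := by
          simpa only [abs_mul, abs_two] using abs_sub (2 * ψ t * (x.2 - y.2)) (μ * (x.1 - y.1))
        _ ≤ 2 * B * dist x y + |μ| * dist x y := by gcongr
        _ ≤ (1 + 2 * B + |μ|) * dist x y := by linarith [dist_nonneg (x := x) (y := y)]
  obtain ⟨u, hu₀, hu⟩ := exists_forall_mem_Icc_hasDerivWithinAt_of_lipschitzWith hαβ hLip
    (fun x => by fun_prop) (w₀, p₀)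
  exact ⟨fun t => (u t).1, fun t => (u t).2, ⟨fun t ht => (hu t ht).fst, fun t ht => (hu t ht).snd⟩,
    congrArg Prod.fst hu₀, congrArg Prod.snd hu₀⟩

lemma eventually_pos_of_hasDerivWithinAt_Ioi {f : ℝ → ℝ} {a f' : ℝ}
    (hf : HasDerivWithinAt f f' (Ioi a) a) (ha : f a = 0) (hf' : 0 < f') :
    ∀ᶠ t in nhdsWithin a (Ioi a), 0 < f t := by
  rw [hasDerivWithinAt_iff_tendsto_slope' self_notMem_Ioi] at hf
  filter_upwards [hf.eventually (lt_mem_nhds hf'), self_mem_nhdsWithin] with t hslope ht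
  rw [slope_def_field, ha, sub_zero] at hslope
  exact (div_pos_iff_of_pos_right (sub_pos.2 ht)).1 hslope

theorem IsStrictBarrier.exists_deriv_pos {ω ψ F F' F'' : ℝ → ℝ} {μ T α β : ℝ}
    (hF : IsStrictBarrier ω μ T F F' F'') (hμ : 0 < μ) (hαβ : α < β) (hT : β - α < 2 * T)
    (hψc : ContinuousOn ψ (Icc α β)) (hψ : IsModulusOfExpansion ω ψ (Icc α β)) :
    ∃ w p, IsDriftSolution ψ μ α β w p ∧ ∀ t ∈ Ioc α β, 0 < p t := by
  obtain ⟨w, p, hw, hwα, hpα⟩ := exists_isDriftSolution hαβ.le hψc μ (-1) 0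
  refine ⟨w, p, hw, fun t ht => ?_⟩
  by_contra! hpt
  have hderiv : HasDerivWithinAt p μ (Ioi α) α := by
    simpa [hwα, hpα] using ((hw.hasDerivWithinAt_deriv α (left_mem_Icc.2 hαβ.le)).mono
      Ioo_subset_Icc_self).mono_of_mem_nhdsWithin (Ioo_mem_nhdsGT hαβ)
  obtain ⟨s, hps, hs⟩ := ((eventually_pos_of_hasDerivWithinAt_Ioi hderiv hpα hμ).and
    (Ioo_mem_nhdsGT ht.1)).exists
  obtain ⟨z, hz, hpz⟩ := intermediate_value_Icc' hs.2.le
    (hw.continuousOn_deriv.mono (Icc_subset_Icc hs.1.le ht.2)) ⟨hpt, hps.le⟩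
  have hzβ : z ≤ β := hz.2.trans ht.2
  have hsz : s < z := hz.1.lt_of_ne fun heq => hps.ne' (heq ▸ hpz)
  have hanti : AntitoneOn w (Icc α z) := hF.antitoneOn (by linarith)
    (hψ.mono (Icc_subset_Icc_right hzβ)) (hw.mono le_rfl hzβ) hpα hpz
  have hderivs : derivWithin w (Icc α z) s = p s :=
    (hw.hasDerivAt ⟨hs.1, hsz.trans_le hzβ⟩).hasDerivWithinAt.derivWithin
      (uniqueDiffOn_Icc (hs.1.trans hsz) s ⟨hs.1.le, hsz.le⟩)
  exact hps.not_ge (hderivs ▸ hanti.derivWithin_nonpos)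

/-- Picone's identity: with `r = μ w / w'` the derivative of `-r v²` is
`(v' - ψ v)² - μ v² - (v' - ψ v + r v)²`. -/
theorem IsDriftSolution.mul_integral_sq_le {ψ w p v : ℝ → ℝ} {μ α β : ℝ}
    (hw : IsDriftSolution ψ μ α β w p) (hp : ∀ t ∈ Icc α β, 0 < p t) (hαβ : α ≤ β)
    (hψ : ContinuousOn ψ (Icc α β)) (hv : ContDiff ℝ 1 v) (hvα : v α = 0) (hvβ : v β = 0) :
    μ * ∫ x in α..β, v x ^ 2 ≤ ∫ x in α..β, (deriv v x - ψ x * v x) ^ 2 := by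
  have hvc : Continuous v := hv.continuous
  set r : ℝ → ℝ := fun x => μ * w x / p x
  have hrc : ContinuousOn r (Icc α β) :=
    (hw.continuousOn.const_mul μ).div hw.continuousOn_deriv fun t ht => (hp t ht).ne'
  have hderiv : ∀ x ∈ Ioo α β, HasDerivAt (fun x => -(r x * v x ^ 2))
      ((deriv v x - ψ x * v x) ^ 2 - μ * v x ^ 2 - (deriv v x - ψ x * v x + r x * v x) ^ 2) x := by
    intro x hx
    have hpx : p x ≠ 0 := (hp x (Ioo_subset_Icc_self hx)).ne'
    refine (((((hw.hasDerivAt hx).const_mul μ).div (hw.hasDerivAt_deriv hx) hpx).mul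
      ((hv.differentiable one_ne_zero x).hasDerivAt.pow 2)).neg).congr_deriv ?_
    simp only [r, Pi.pow_apply, Pi.div_apply]
    field_simp
    ring
  have hAint : IntervalIntegrable (fun x => (deriv v x - ψ x * v x) ^ 2) volume α β :=
    ContinuousOn.intervalIntegrable_of_Icc hαβ
      (((hv.continuous_deriv le_rfl).continuousOn.sub (hψ.mul hvc.continuousOn)).pow 2)
  have hBint : IntervalIntegrable (fun x => μ * v x ^ 2) volume α β :=
    Continuous.intervalIntegrable (by fun_prop) _ _
  have hftc := intervalIntegral.sub_le_integral_of_hasDeriv_right_of_le hαβ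
    (g := fun x => -(r x * v x ^ 2)) (by fun_prop)
    (fun x hx => (hderiv x hx).hasDerivWithinAt)
    ((intervalIntegrable_iff_integrableOn_Icc_of_le hαβ).1 (hAint.sub hBint))
    fun x _ => sub_le_self _ (sq_nonneg _)
  simp only [hvα, hvβ, intervalIntegral.integral_sub hAint hBint,
    intervalIntegral.integral_const_mul] at hftc
  linarith

theorem IsStrictBarrier.mul_integral_sq_le {ω ψ v F F' F'' : ℝ → ℝ} {μ T α a β : ℝ}
    (hF : IsStrictBarrier ω μ T F F' F'') (hμ : 0 < μ) (hαa : α < a) (haβ : a ≤ β)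
    (hT : β - α < 2 * T) (hψc : ContinuousOn ψ (Icc α β))
    (hψ : IsModulusOfExpansion ω ψ (Icc α β)) (hv : ContDiff ℝ 1 v) (hva : v a = 0)
    (hvβ : v β = 0) :
    μ * ∫ x in a..β, v x ^ 2 ≤ ∫ x in a..β, (deriv v x - ψ x * v x) ^ 2 := by
  obtain ⟨w, p, hw, hp⟩ := hF.exists_deriv_pos hμ (hαa.trans_le haβ) hT hψc hψ
  exact (hw.mono hαa.le le_rfl).mul_integral_sq_le
    (fun t ht => hp t ⟨hαa.trans_le ht.1, ht.2⟩) haβ (hψc.mono (Icc_subset_Icc_left hαa.le))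
    hv hva hvβ

end Picone

section Steklov

/-- The Steklov average of `ψ` over the interval `[x - η, x]`, written as a mean over `[0, 1]`;
for `η ≠ 0` it is a continuous function of `x`. -/
def steklov (ψ : ℝ → ℝ) (η x : ℝ) : ℝ :=
  ∫ s in (0 : ℝ)..1, ψ (x - η * s)

variable {ψ : ℝ → ℝ} {η x : ℝ}

lemma intervalIntegrable_comp_sub_mul (hψ : Monotone ψ) (hη : 0 ≤ η) (x a b : ℝ) :
    IntervalIntegrable (fun s => ψ (x - η * s)) volume a b :=
  Antitone.intervalIntegrable fun s t hst => hψ (by gcongr)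

lemma continuous_steklov (hψ : Monotone ψ) (hη : η ≠ 0) : Continuous (steklov ψ η) := by
  have hint : ∀ a b, IntervalIntegrable ψ volume a b := fun a b => hψ.intervalIntegrable
  have hprim := intervalIntegral.continuous_primitive hint 0
  have heq : steklov ψ η =
      fun x => η⁻¹ * ((∫ s in (0 : ℝ)..x, ψ s) - ∫ s in (0 : ℝ)..(x - η), ψ s) := by
    ext x
    rw [steklov, intervalIntegral.integral_comp_sub_mul _ hη, mul_one, mul_zero, sub_zero,
      smul_eq_mul, intervalIntegral.integral_interval_sub_left (hint _ _) (hint _ _)]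
  rw [heq]
  fun_prop

lemma steklov_le (hψ : Monotone ψ) (hη : 0 ≤ η) : steklov ψ η x ≤ ψ x := by
  simpa [steklov] using intervalIntegral.integral_mono_on zero_le_one
    (intervalIntegrable_comp_sub_mul hψ hη x 0 1) (intervalIntegrable_const (c := ψ x))
    fun s hs => hψ (sub_le_self x (mul_nonneg hη hs.1))

lemma le_steklov (hψ : Monotone ψ) (hη : 0 ≤ η) : ψ (x - η) ≤ steklov ψ η x := by
  simpa [steklov] using intervalIntegral.integral_mono_on zero_le_one
    (intervalIntegrable_const (c := ψ (x - η))) (intervalIntegrable_comp_sub_mul hψ hη x 0 1)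
    fun s hs => hψ (sub_le_sub_left (mul_le_of_le_one_right hη hs.2) x)

lemma IsModulusOfExpansion.steklov {ω : ℝ → ℝ} {α β : ℝ} (hψ : Monotone ψ) (hη : 0 ≤ η)
    (hω : IsModulusOfExpansion ω ψ (Icc α β)) :
    IsModulusOfExpansion ω (steklov ψ η) (Icc (α + η) β) := by
  intro x hx y hy hxy
  have hshift : ∀ z ∈ Icc (α + η) β, ∀ s ∈ Icc (0 : ℝ) 1, z - η * s ∈ Icc α β := fun z hz s hs =>
    ⟨by linarith [hz.1, mul_le_of_le_one_right hη hs.2], by linarith [hz.2, mul_nonneg hη hs.1]⟩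
  have hintx := intervalIntegrable_comp_sub_mul hψ hη x 0 1
  have hinty := intervalIntegrable_comp_sub_mul hψ hη y 0 1
  have hmono := intervalIntegral.integral_mono_on zero_le_one
    (intervalIntegrable_const (c := ω ((y - x) / 2))) (hinty.sub hintx) fun s hs => by
      simpa using hω (hshift x hx s hs) (hshift y hy s hs) (sub_lt_sub_right hxy _)
  simpa [_root_.steklov, intervalIntegral.integral_sub hinty hintx] using hmono

lemma tendsto_steklov (hψ : Monotone ψ) (hx : ContinuousAt ψ x) :
    Tendsto (fun η => steklov ψ η x) (nhdsWithin 0 (Ioi 0)) (nhds (ψ x)) := by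
  have hshift : Tendsto (fun η => ψ (x - η)) (nhdsWithin 0 (Ioi 0)) (nhds (ψ x)) :=
    hx.tendsto.comp <| tendsto_nhdsWithin_of_tendsto_nhds <|
      (by fun_prop : Continuous fun η => x - η).tendsto' 0 x (sub_zero x)
  refine tendsto_of_tendsto_of_tendsto_of_le_of_le' hshift tendsto_const_nhds ?_ ?_ <;>
    filter_upwards [self_mem_nhdsWithin] with η hη
  · exact le_steklov hψ (le_of_lt hη)
  · exact steklov_le hψ (le_of_lt hη)

lemma tendsto_integral_sub_steklov_mul_sq (hψ : Monotone ψ) {u v : ℝ → ℝ} (hu : Continuous u)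
    (hv : Continuous v) {a b : ℝ} (hab : a ≤ b) :
    Tendsto (fun η => ∫ x in a..b, (u x - steklov ψ η x * v x) ^ 2) (nhdsWithin 0 (Ioi 0))
      (nhds (∫ x in a..b, (u x - ψ x * v x) ^ 2)) := by
  set C := max |ψ (a - 1)| |ψ b|
  refine intervalIntegral.tendsto_integral_filter_of_dominated_convergence
    (fun x => (|u x| + C * |v x|) ^ 2) ?_ ?_ (Continuous.intervalIntegrable (by fun_prop) _ _) ?_
  · filter_upwards [self_mem_nhdsWithin] with η hη
    have := continuous_steklov hψ (ne_of_gt hη)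
    exact Continuous.aestronglyMeasurable (by fun_prop)
  · filter_upwards [Ioo_mem_nhdsGT one_pos] with η hη
    refine .of_forall fun x hx => ?_
    rw [uIoc_of_le hab] at hx
    have hbound : |steklov ψ η x| ≤ C := abs_le_max_abs_abs
      ((hψ (by linarith [hx.1, hη.2])).trans (le_steklov hψ hη.1.le))
      ((steklov_le hψ hη.1.le).trans (hψ hx.2))
    rw [Real.norm_eq_abs, abs_pow]
    gcongr
    calc |u x - steklov ψ η x * v x| ≤ |u x| + |steklov ψ η x * v x| := abs_sub _ _
      _ ≤ |u x| + C * |v x| := by rw [abs_mul]; gcongr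
  · filter_upwards [hψ.countable_not_continuousAt.ae_notMem volume] with x hx _
    exact (tendsto_const_nhds.sub
      ((tendsto_steklov hψ (by simpa using hx)).mul tendsto_const_nhds)).pow 2

theorem IsStrictBarrier.mul_integral_sq_le_of_monotone {ω v F F' F'' : ℝ → ℝ} {μ T α a β : ℝ}
    (hF : IsStrictBarrier ω μ T F F' F'') (hμ : 0 < μ) (hαa : α < a) (haβ : a ≤ β)
    (hT : β - α < 2 * T) (hψ : Monotone ψ) (hω : IsModulusOfExpansion ω ψ (Icc α β))
    (hv : ContDiff ℝ 1 v) (hva : v a = 0) (hvβ : v β = 0) :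
    μ * ∫ x in a..β, v x ^ 2 ≤ ∫ x in a..β, (deriv v x - ψ x * v x) ^ 2 := by
  refine ge_of_tendsto (tendsto_integral_sub_steklov_mul_sq hψ (hv.continuous_deriv le_rfl)
    hv.continuous haβ) ?_
  filter_upwards [Ioo_mem_nhdsGT (sub_pos.2 hαa)] with η hη
  exact hF.mul_integral_sq_le hμ (lt_sub_iff_add_lt'.1 hη.2) haβ (by linarith [hη.1])
    (continuous_steklov hψ hη.1.ne').continuousOn (hω.steklov hψ hη.1.le) hv hva hvβ

end Steklov

section EnergyIdentity

variable {ν : Measure ℝ} {a b : ℝ}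

lemma integrableOn_Ioc_of_measure_ne_top {f : ℝ → ℝ} (hf : Continuous f)
    (hν : ν (Ioc a b) ≠ ∞) : IntegrableOn f (Ioc a b) ν := by
  obtain ⟨C, hC⟩ := (isCompact_Icc (a := a) (b := b)).exists_bound_of_continuousOn hf.continuousOn
  exact .of_bound hν.lt_top hf.aestronglyMeasurable C <|
    ae_restrict_of_forall_mem measurableSet_Ioc fun x hx => hC x (Ioc_subset_Icc_self hx)

theorem setIntegral_Ioc_eq_sub_integral_deriv_mul {F : ℝ → ℝ} (hab : a ≤ b)
    (hν : ν (Ioc a b) ≠ ∞) (hF : ContDiff ℝ 1 F) :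
    ∫ x in Ioc a b, F x ∂ν =
      F b * ν.real (Ioc a b) - ∫ y in a..b, deriv F y * ν.real (Ioc a y) := by
  have hF' : Continuous (deriv F) := hF.continuous_deriv le_rfl
  have : IsFiniteMeasure (ν.restrict (Ioc a b)) := isFiniteMeasure_restrict.2 hν
  set G : ℝ → ℝ → ℝ := fun x y => (Iic y).indicator (fun _ => deriv F y) x
  have hF'_int : Integrable (deriv F) (volume.restrict (Ioc a b)) := hF'.integrableOn_Ioc
  have hG_int : Integrable (Function.uncurry G)
      ((ν.restrict (Ioc a b)).prod (volume.restrict (Ioc a b))) :=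
    (hF'_int.comp_snd _).indicator (measurableSet_le measurable_fst measurable_snd)
  have hG_right : ∀ x ∈ Ioc a b, ∫ y in Ioc a b, G x y = F b - F x := fun x hx => by
    have hset : Ioc a b ∩ Ici x = Icc x b := by
      ext y; exact ⟨fun h => ⟨h.2, h.1.2⟩, fun h => ⟨⟨hx.1.trans_le h.1, h.2⟩, h.1⟩⟩
    calc ∫ y in Ioc a b, G x y = ∫ y in Ioc a b, (Ici x).indicator (deriv F) y := rfl
      _ = ∫ y in x..b, deriv F y := by
        rw [setIntegral_indicator measurableSet_Ici, hset, integral_Icc_eq_integral_Ioc,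
          intervalIntegral.integral_of_le hx.2]
      _ = F b - F x := intervalIntegral.integral_deriv_eq_sub
        (fun y _ => hF.differentiable one_ne_zero y) (hF'.intervalIntegrable _ _)
  have hG_left : ∀ y ∈ Ioc a b,
      ∫ x in Ioc a b, G x y ∂ν = deriv F y * ν.real (Ioc a y) := fun y hy => by
    rw [setIntegral_indicator measurableSet_Iic, setIntegral_const, Ioc_inter_Iic,
      min_eq_right hy.2, smul_eq_mul, mul_comm]
  have hfubini := integral_integral_swap hG_int
  rw [setIntegral_congr_fun measurableSet_Ioc hG_right,
    setIntegral_congr_fun measurableSet_Ioc hG_left, integral_sub (integrable_const _)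
      (integrableOn_Ioc_of_measure_ne_top hF.continuous hν), setIntegral_const, smul_eq_mul,
    ← intervalIntegral.integral_of_le hab (μ := volume)] at hfubini
  linarith

theorem setIntegral_Ioc_eq_neg_integral_deriv_mul {F ψ : ℝ → ℝ} (hab : a ≤ b) (hψ : Monotone ψ)
    (hν : ∀ y ∈ Icc a b, ν (Ioc a y) = ENNReal.ofReal (ψ y - ψ a)) (hF : ContDiff ℝ 1 F)
    (hFa : F a = 0) (hFb : F b = 0) :
    ∫ x in Ioc a b, F x ∂ν = -∫ x in a..b, deriv F x * ψ x := by
  have hF' : Continuous (deriv F) := hF.continuous_deriv le_rfl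
  have hreal : EqOn (fun y => deriv F y * ν.real (Ioc a y))
      (fun y => deriv F y * ψ y - deriv F y * ψ a) (uIcc a b) := fun y hy => by
    rw [uIcc_of_le hab] at hy
    simp only [measureReal_def, hν y hy, ENNReal.toReal_ofReal (sub_nonneg.2 (hψ hy.1)), mul_sub]
  have hderiv : ∫ y in a..b, deriv F y = 0 := by
    rw [intervalIntegral.integral_deriv_eq_sub (fun y _ => hF.differentiable one_ne_zero y)
      (hF'.intervalIntegrable _ _), hFa, hFb, sub_zero]
  rw [setIntegral_Ioc_eq_sub_integral_deriv_mul hab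
      (by rw [hν b (right_mem_Icc.2 hab)]; exact ENNReal.ofReal_ne_top) hF,
    intervalIntegral.integral_congr hreal, intervalIntegral.integral_sub
      (hψ.intervalIntegrable.continuousOn_mul hF'.continuousOn)
      ((hF'.intervalIntegrable _ _).mul_const _),
    intervalIntegral.integral_mul_const, hderiv, hFb]
  ring

lemma integrableOn_Ioc_sq_mul {f ψ : ℝ → ℝ} (hψ : Monotone ψ) (hf : Continuous f) :
    IntegrableOn (fun x => ψ x ^ 2 * f x) (Ioc a b) := by
  have hbound : ∀ x ∈ Ioc a b, ‖ψ x ^ 2‖ ≤ max |ψ a| |ψ b| ^ 2 := fun x hx => by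
    rw [Real.norm_eq_abs, abs_pow]
    gcongr
    exact abs_le_max_abs_abs (hψ hx.1.le) (hψ hx.2)
  exact hf.integrableOn_Ioc.bdd_mul (hψ.measurable.pow_const 2).aestronglyMeasurable
    (ae_restrict_of_forall_mem measurableSet_Ioc hbound)

theorem lintegral_energy_eq {v ψ : ℝ → ℝ} (hab : a ≤ b) (hψ : Monotone ψ)
    (hν : ∀ y ∈ Icc a b, ν (Ioc a y) = ENNReal.ofReal (ψ y - ψ a)) (hv : ContDiff ℝ 1 v)
    (hva : v a = 0) (hvb : v b = 0) :
    (∫⁻ x in Ioc a b, ENNReal.ofReal (deriv v x ^ 2)) +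
        (∫⁻ x in Ioc a b, ENNReal.ofReal (v x ^ 2) ∂ν) +
        ∫⁻ x in Ioc a b, ENNReal.ofReal (ψ x ^ 2) * ENNReal.ofReal (v x ^ 2) =
      ENNReal.ofReal (∫ x in a..b, (deriv v x - ψ x * v x) ^ 2) := by
  have hvc : Continuous v := hv.continuous
  have hv'c : Continuous (deriv v) := hv.continuous_deriv le_rfl
  have hderiv : ∀ x, deriv (fun x => v x ^ 2) x = 2 * v x * deriv v x := fun x => by
    simp [deriv_fun_pow (hv.differentiable one_ne_zero x)]
  have hint₁ : IntegrableOn (fun x => deriv v x ^ 2) (Ioc a b) := (hv'c.pow 2).integrableOn_Ioc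
  have hint₂ : IntegrableOn (fun x => v x ^ 2) (Ioc a b) ν :=
    integrableOn_Ioc_of_measure_ne_top (hvc.pow 2)
      (by rw [hν b (right_mem_Icc.2 hab)]; exact ENNReal.ofReal_ne_top)
  have hint₃ : IntegrableOn (fun x => ψ x ^ 2 * v x ^ 2) (Ioc a b) :=
    integrableOn_Ioc_sq_mul hψ (hvc.pow 2)
  have hint₄ : IntervalIntegrable (fun x => deriv (fun x => v x ^ 2) x * ψ x) volume a b := by
    simp only [hderiv]
    exact hψ.intervalIntegrable.continuousOn_mul (by fun_prop)
  simp only [← ENNReal.ofReal_mul (sq_nonneg (ψ _))]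
  rw [← ofReal_integral_eq_lintegral_ofReal hint₁ (.of_forall fun x => sq_nonneg _),
    ← ofReal_integral_eq_lintegral_ofReal hint₂ (.of_forall fun x => sq_nonneg _),
    ← ofReal_integral_eq_lintegral_ofReal hint₃ (.of_forall fun x => by positivity),
    ← ENNReal.ofReal_add (by positivity) (by positivity),
    ← ENNReal.ofReal_add (by positivity) (by positivity),
    setIntegral_Ioc_eq_neg_integral_deriv_mul hab hψ hν (hv.pow 2) (by simp [hva]) (by simp [hvb])]
  rw [intervalIntegrable_iff_integrableOn_Ioc_of_le hab] at hint₄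
  simp only [intervalIntegral.integral_of_le hab]
  have hint₅ : IntegrableOn (fun x => deriv v x ^ 2 - deriv (fun x => v x ^ 2) x * ψ x)
      (Ioc a b) := hint₁.sub hint₄
  rw [← sub_eq_add_neg, ← integral_sub hint₁ hint₄, ← integral_add hint₅ hint₃]
  congr 2 with x
  rw [hderiv]
  ring

theorem IsStrictBarrier.mul_lintegral_sq_le {ω ψ v F F' F'' : ℝ → ℝ} {μ T α : ℝ}
    (hF : IsStrictBarrier ω μ T F F' F'') (hμ : 0 < μ) (hαa : α < a) (hab : a ≤ b)
    (hT : b - α < 2 * T) (hψ : MonotoneOn ψ (Icc α b)) (hω : IsModulusOfExpansion ω ψ (Icc α b))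
    (hν : ∀ y ∈ Icc a b, ν (Ioc a y) = ENNReal.ofReal (ψ y - ψ a)) (hv : ContDiff ℝ 1 v)
    (hva : v a = 0) (hvb : v b = 0) :
    ENNReal.ofReal μ * ∫⁻ x in Ioc a b, ENNReal.ofReal (v x ^ 2) ≤
      (∫⁻ x in Ioc a b, ENNReal.ofReal (deriv v x ^ 2)) +
        (∫⁻ x in Ioc a b, ENNReal.ofReal (v x ^ 2) ∂ν) +
        ∫⁻ x in Ioc a b, ENNReal.ofReal (ψ x ^ 2) * ENNReal.ofReal (v x ^ 2) := by
  obtain ⟨g, hg, hgψ⟩ := hψ.exists_monotone_extension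
    (bddBelow_Icc.mono hψ.mapsTo_Icc.image_subset) (bddAbove_Icc.mono hψ.mapsTo_Icc.image_subset)
  have hsub : Icc a b ⊆ Icc α b := Icc_subset_Icc_left hαa.le
  have hωg : IsModulusOfExpansion ω g (Icc α b) := fun x hx y hy hxy => by
    simpa only [← hgψ hx, ← hgψ hy] using hω hx hy hxy
  have hνg : ∀ y ∈ Icc a b, ν (Ioc a y) = ENNReal.ofReal (g y - g a) := fun y hy => by
    rw [hν y hy, hgψ (hsub hy), hgψ (hsub (left_mem_Icc.2 hab))]
  have hint : IntegrableOn (fun x => v x ^ 2) (Ioc a b) := (hv.continuous.pow 2).integrableOn_Ioc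
  have hψg : ∫⁻ x in Ioc a b, ENNReal.ofReal (ψ x ^ 2) * ENNReal.ofReal (v x ^ 2) =
      ∫⁻ x in Ioc a b, ENNReal.ofReal (g x ^ 2) * ENNReal.ofReal (v x ^ 2) :=
    setLIntegral_congr_fun measurableSet_Ioc fun x hx => by
      rw [hgψ (hsub (Ioc_subset_Icc_self hx))]
  rw [hψg, lintegral_energy_eq hab hg hνg hv hva hvb,
    ← ofReal_integral_eq_lintegral_ofReal hint (.of_forall fun x => sq_nonneg _),
    ← ENNReal.ofReal_mul hμ.le, ← intervalIntegral.integral_of_le hab]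
  exact ENNReal.ofReal_le_ofReal
    (hF.mul_integral_sq_le_of_monotone hμ hαa hab hT hg hωg hv hva hvb)

end EnergyIdentity

section Eigenvalue

/-- The quadratic form `∫ v'² + ∫ v² dq` on `(a, b)`, numerator of the Rayleigh quotient. -/
def dirEnergy (a b : ℝ) (q : Measure ℝ) (v : ℝ → ℝ) : ℝ≥0∞ :=
  (∫⁻ x in Ioo a b, ENNReal.ofReal (deriv v x ^ 2)) + ∫⁻ x in Ioo a b, ENNReal.ofReal (v x ^ 2) ∂q

lemma dirEnergy_mono {a b : ℝ} {q : Measure ℝ} {u v : ℝ → ℝ} (h : ∀ x, |u x| ≤ |v x|)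
    (h' : ∀ x, |deriv u x| ≤ |deriv v x|) : dirEnergy a b q u ≤ dirEnergy a b q v := by
  unfold dirEnergy
  gcongr ?_ + ?_ <;> refine lintegral_mono fun x => ENNReal.ofReal_le_ofReal ?_
  exacts [sq_le_sq.2 (h' x), sq_le_sq.2 (h x)]

lemma le_lam1_of_forall_mul_le {a b : ℝ} {q : Measure ℝ} {c : ℝ≥0∞}
    (h : ∀ v, TestFun a b v →
      c * ∫⁻ x in Ioo a b, ENNReal.ofReal (v x ^ 2) ≤ dirEnergy a b q v) : c ≤ lam1 a b q := by
  rw [lam1, le_iInf₂_iff]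
  rintro v ⟨hv, hne⟩
  have hint : IntegrableOn (fun x => v x ^ 2) (Ioo a b) :=
    (hv.1.continuous.pow 2).integrableOn_Icc.mono_set Ioo_subset_Icc_self
  exact (ENNReal.le_div_iff_mul_le (.inl hne) (.inl hint.lintegral_lt_top.ne)).2 (h v hv)

lemma PsiA.lintegral_qM (P : PsiA) {f : ℝ → ℝ≥0∞} (hf : Measurable f) :
    ∫⁻ x in Ioo (-(π / 2)) (π / 2), f x ∂P.qM =
      (∫⁻ x in P.dom, f x ∂P.nu) + (∫⁻ x in P.dom, ENNReal.ofReal (P.psi x ^ 2) * f x) +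
        ∞ * ∫⁻ x in Ioo (-(π / 2)) (π / 2) \ P.dom, f x := by
  have hdom : MeasurableSet P.dom := P.domConn.measurableSet
  have hψ : AEMeasurable P.psi (volume.restrict P.dom) :=
    aemeasurable_restrict_of_monotoneOn hdom P.mono
  rw [PsiA.qM, Measure.restrict_add, Measure.restrict_add, lintegral_add_measure,
    lintegral_add_measure, Measure.restrict_smul, lintegral_smul_measure,
    Measure.restrict_restrict measurableSet_Ioo, Measure.restrict_restrict measurableSet_Ioo,
    restrict_withDensity measurableSet_Ioo, Measure.restrict_restrict measurableSet_Ioo,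
    inter_eq_self_of_subset_right P.domSub, inter_eq_self_of_subset_right sdiff_subset,
    lintegral_withDensity_eq_lintegral_mul₀ (hψ.pow_const 2).ennreal_ofReal hf.aemeasurable]
  rfl

lemma subset_interior_of_volume_sdiff_eq_zero {U s : Set ℝ} (hU : IsOpen U)
    (hs : s.OrdConnected) (hUs : volume (U \ s) = 0) : U ⊆ interior s := by
  have hmeets : ∀ V ⊆ U, IsOpen V → V.Nonempty → ∃ x ∈ V, x ∈ s := fun V hVU hV hne => by
    by_contra! hdisj
    have hVUs : V ⊆ U \ s := fun x hx => ⟨hVU hx, hdisj x hx⟩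
    exact hV.measure_ne_zero volume hne (measure_mono_null hVUs hUs)
  intro x hx
  have hUx : U ∈ nhds x := hU.mem_nhds hx
  obtain ⟨l, hl, hls⟩ := hmeets (Iio x ∩ U) inter_subset_right (isOpen_Iio.inter hU)
    (Filter.nonempty_of_mem (inter_mem_nhdsWithin (Iio x) hUx))
  obtain ⟨r, hr, hrs⟩ := hmeets (Ioi x ∩ U) inter_subset_right (isOpen_Ioi.inter hU)
    (Filter.nonempty_of_mem (inter_mem_nhdsWithin (Ioi x) hUx))
  exact mem_interior_iff_mem_nhds.2 (mem_of_superset (Icc_mem_nhds hl.1 hr.1) (hs.out hls hrs))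

lemma exists_subset_Ioo_of_isCompact {K s : Set ℝ} (hK : IsCompact K) (hne : K.Nonempty)
    (hKs : K ⊆ interior s) : ∃ α a b, α < a ∧ a ≤ b ∧ α ∈ s ∧ b ∈ s ∧ K ⊆ Ioo a b := by
  obtain ⟨l, hl, hleast⟩ := hK.exists_isLeast hne
  obtain ⟨r, hr, hgreatest⟩ := hK.exists_isGreatest hne
  obtain ⟨α, hαl, hα⟩ := Filter.nonempty_of_mem
    (inter_mem_nhdsWithin (Iio l) (mem_interior_iff_mem_nhds.1 (hKs hl)))
  obtain ⟨b, hrb, hb⟩ := Filter.nonempty_of_mem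
    (inter_mem_nhdsWithin (Ioi r) (mem_interior_iff_mem_nhds.1 (hKs hr)))
  obtain ⟨a, hαa, hal⟩ := exists_between hαl.out
  exact ⟨α, a, b, hαa, (hal.le.trans (hleast hr)).trans hrb.out.le, hα, hb,
    fun x hx => ⟨hal.trans_le (hleast hx), (hgreatest hx).trans_lt hrb⟩⟩

theorem IsStrictBarrier.mul_lintegral_sq_le_dirEnergy_of_tsupport_subset {ω v F F' F'' : ℝ → ℝ}
    {μ : ℝ} (hF : IsStrictBarrier ω μ (π / 2) F F' F'') (hμ : 0 < μ) {P : PsiA}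
    (hω : IsModulusOfExpansion ω P.psi P.dom) (hv : ContDiff ℝ 1 v)
    (hsupp : tsupport v ⊆ interior P.dom) :
    ENNReal.ofReal μ * ∫⁻ x in Ioo (-(π / 2)) (π / 2), ENNReal.ofReal (v x ^ 2) ≤
      dirEnergy (-(π / 2)) (π / 2) P.qM v := by
  obtain hempty | hne := (tsupport v).eq_empty_or_nonempty
  · simp [tsupport_eq_empty_iff.1 hempty]
  have hcompact : IsCompact (tsupport v) :=
    isCompact_Icc.of_isClosed_subset (isClosed_tsupport v) <|
      hsupp.trans (interior_subset.trans (P.domSub.trans Ioo_subset_Icc_self))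
  obtain ⟨α, a, b, hαa, hab, hα, hb, hsub⟩ := exists_subset_Ioo_of_isCompact hcompact hne hsupp
  have hv0 : ∀ x ∉ Ioo a b, v x = 0 := fun x hx =>
    image_eq_zero_of_notMem_tsupport fun h => hx (hsub h)
  have hαb : Icc α b ⊆ P.dom := P.domConn.out hα hb
  have hIoc : Ioc a b ⊆ P.dom := fun x hx => hαb ⟨(hαa.trans hx.1).le, hx.2⟩
  have hν : ∀ y ∈ Icc a b, P.nu (Ioc a y) = ENNReal.ofReal (P.psi y - P.psi a) := fun y hy =>
    P.nu_eq (hαb ⟨hαa.le, hab⟩) (hαb ⟨hαa.le.trans hy.1, hy.2⟩) hy.1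
  have hsubπ : Ioc a b ⊆ Ioo (-(π / 2)) (π / 2) := hIoc.trans P.domSub
  have hsupp' : (Function.support fun x => ENNReal.ofReal (v x ^ 2)) ⊆ Ioc a b := fun x hx => by
    by_contra hxab
    simp [hv0 x fun h => hxab (Ioo_subset_Ioc_self h)] at hx
  calc ENNReal.ofReal μ * ∫⁻ x in Ioo (-(π / 2)) (π / 2), ENNReal.ofReal (v x ^ 2)
      = ENNReal.ofReal μ * ∫⁻ x in Ioc a b, ENNReal.ofReal (v x ^ 2) := by
        rw [setLIntegral_eq_of_support_subset hsupp', setLIntegral_eq_of_support_subset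
          (hsupp'.trans hsubπ)]
    _ ≤ (∫⁻ x in Ioc a b, ENNReal.ofReal (deriv v x ^ 2)) +
          (∫⁻ x in Ioc a b, ENNReal.ofReal (v x ^ 2) ∂P.nu) +
          ∫⁻ x in Ioc a b, ENNReal.ofReal (P.psi x ^ 2) * ENNReal.ofReal (v x ^ 2) :=
        hF.mul_lintegral_sq_le hμ hαa hab (by linarith [(P.domSub hα).1, (P.domSub hb).2])
          (P.mono.mono hαb) (hω.mono hαb) hν hv (hv0 a (by simp)) (hv0 b (by simp))
    _ ≤ dirEnergy (-(π / 2)) (π / 2) P.qM v := by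
        rw [dirEnergy, P.lintegral_qM (hv.continuous.measurable.pow_const 2).ennreal_ofReal,
          add_assoc]
        refine add_le_add (lintegral_mono_set hsubπ) (le_add_right ?_)
        gcongr

lemma PsiA.support_subset_interior_dom (P : PsiA) {v : ℝ → ℝ}
    (hv : TestFun (-(π / 2)) (π / 2) v) (hfin : dirEnergy (-(π / 2)) (π / 2) P.qM v ≠ ∞) :
    Function.support v ⊆ interior P.dom := by
  have hvc : Continuous v := hv.1.continuous
  refine subset_interior_of_volume_sdiff_eq_zero hvc.isOpen_support P.domConn ?_
  have hzero : ∫⁻ x in Ioo (-(π / 2)) (π / 2) \ P.dom, ENNReal.ofReal (v x ^ 2) = 0 := by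
    by_contra hne
    apply hfin
    rw [dirEnergy, P.lintegral_qM (hvc.measurable.pow_const 2).ennreal_ofReal,
      ENNReal.top_mul hne, add_top, add_top]
  rw [setLIntegral_eq_zero_iff (measurableSet_Ioo.diff P.domConn.measurableSet) (by fun_prop)]
    at hzero
  refine measure_mono_null (fun x hx => ?_) hzero
  have hxπ : x ∈ Ioo (-(π / 2)) (π / 2) := by_contra fun h => hx.1 (hv.2 x h)
  exact fun h => (ENNReal.ofReal_pos.2 (sq_pos_of_ne_zero hx.1)).ne' (h ⟨hxπ, hx.2⟩)

/-- A `C¹` truncation of the identity: it vanishes on `[-η, η]` and has slope `1` off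
`[-2η, 2η]`. -/
def softThreshold (η s : ℝ) : ℝ :=
  ∫ r in (0 : ℝ)..s, max 0 (min 1 (|r| / η - 1))

lemma hasDerivAt_softThreshold (η s : ℝ) :
    HasDerivAt (softThreshold η) (max 0 (min 1 (|s| / η - 1))) s := by
  have hcont : Continuous fun r : ℝ => max 0 (min 1 (|r| / η - 1)) := by fun_prop
  exact intervalIntegral.integral_hasDerivAt_right (hcont.intervalIntegrable _ _)
    (hcont.stronglyMeasurableAtFilter _ _) hcont.continuousAt

lemma contDiff_softThreshold (η : ℝ) : ContDiff ℝ 1 (softThreshold η) := by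
  rw [contDiff_one_iff_deriv]
  refine ⟨fun s => (hasDerivAt_softThreshold η s).differentiableAt, ?_⟩
  rw [funext fun s => (hasDerivAt_softThreshold η s).deriv]
  fun_prop

lemma softThreshold_eq_zero {η s : ℝ} (hη : 0 < η) (hs : |s| ≤ η) : softThreshold η s = 0 := by
  refine intervalIntegral.integral_zero_ae (.of_forall fun r hr => ?_)
  have hr : |r| ≤ |s| := by simpa using abs_sub_left_of_mem_uIcc (uIoc_subset_uIcc hr)
  have : |r| / η ≤ 1 := (div_le_one hη).2 (hr.trans hs)
  exact max_eq_left ((min_le_right _ _).trans (by linarith))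

lemma abs_max_zero_min_one_le (r : ℝ) : |max 0 (min 1 r)| ≤ 1 := by
  rw [abs_of_nonneg (le_max_left _ _)]
  exact max_le zero_le_one (min_le_left _ _)

lemma abs_softThreshold_le (η s : ℝ) : |softThreshold η s| ≤ |s| := by
  simpa [softThreshold] using intervalIntegral.norm_integral_le_of_norm_le_const (a := 0) (b := s)
    (f := fun r => max 0 (min 1 (|r| / η - 1))) fun r _ => abs_max_zero_min_one_le (|r| / η - 1)

lemma tendsto_softThreshold (s : ℝ) :
    Tendsto (fun η => softThreshold η s) (nhdsWithin 0 (Ioi 0)) (nhds s) := by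
  have hlim : Tendsto (fun η => softThreshold η s) (nhdsWithin 0 (Ioi 0))
      (nhds (∫ _ in (0 : ℝ)..s, 1)) := by
    refine intervalIntegral.tendsto_integral_filter_of_dominated_convergence (fun _ => 1)
      (.of_forall fun η => Continuous.aestronglyMeasurable (by fun_prop))
      (.of_forall fun η => .of_forall fun _ _ => abs_max_zero_min_one_le _)
      intervalIntegrable_const ?_
    filter_upwards [(countable_singleton (0 : ℝ)).ae_notMem volume] with r hr _
    have hr : 0 < |r| := abs_pos.2 hr
    refine tendsto_const_nhds.congr' ?_
    filter_upwards [Ioo_mem_nhdsGT (half_pos hr)] with η hη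
    have : 2 ≤ |r| / η := (le_div_iff₀ hη.1).2 (by linarith [hη.2])
    rw [min_eq_left (by linarith), max_eq_right zero_le_one]
  simpa using hlim

theorem IsStrictBarrier.mul_lintegral_sq_le_dirEnergy {ω v F F' F'' : ℝ → ℝ} {μ : ℝ}
    (hF : IsStrictBarrier ω μ (π / 2) F F' F'') (hμ : 0 < μ) {P : PsiA}
    (hω : IsModulusOfExpansion ω P.psi P.dom) (hv : TestFun (-(π / 2)) (π / 2) v) :
    ENNReal.ofReal μ * ∫⁻ x in Ioo (-(π / 2)) (π / 2), ENNReal.ofReal (v x ^ 2) ≤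
      dirEnergy (-(π / 2)) (π / 2) P.qM v := by
  by_cases hfin : dirEnergy (-(π / 2)) (π / 2) P.qM v = ∞
  · simp [hfin]
  have hsupp := P.support_subset_interior_dom hv hfin
  have hvc : Continuous v := hv.1.continuous
  have hle : ∀ η > 0, ENNReal.ofReal μ *
      ∫⁻ x in Ioo (-(π / 2)) (π / 2), ENNReal.ofReal (softThreshold η (v x) ^ 2) ≤
        dirEnergy (-(π / 2)) (π / 2) P.qM v := fun η hη => by
    have htsupp : tsupport (fun x => softThreshold η (v x)) ⊆ interior P.dom := by
      refine subset_trans (closure_minimal (fun x hx => ?_)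
        (isClosed_le continuous_const hvc.abs : IsClosed {x | η ≤ |v x|})) fun x hx => hsupp ?_
      · by_contra hlt
        exact hx (softThreshold_eq_zero hη (not_le.1 hlt).le)
      · exact abs_pos.1 (hη.trans_le hx)
    refine (hF.mul_lintegral_sq_le_dirEnergy_of_tsupport_subset hμ hω
      ((contDiff_softThreshold η).comp hv.1) htsupp).trans
      (dirEnergy_mono (fun x => abs_softThreshold_le η (v x)) fun x => ?_)
    have hderiv := (hasDerivAt_softThreshold η (v x)).comp x
      (hv.1.differentiable one_ne_zero x).hasDerivAt
    rw [hderiv.deriv, abs_mul]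
    exact mul_le_of_le_one_left (abs_nonneg _) (abs_max_zero_min_one_le _)
  have hlim : Tendsto (fun η => ∫⁻ x in Ioo (-(π / 2)) (π / 2),
      ENNReal.ofReal (softThreshold η (v x) ^ 2)) (nhdsWithin 0 (Ioi 0))
      (nhds (∫⁻ x in Ioo (-(π / 2)) (π / 2), ENNReal.ofReal (v x ^ 2))) := by
    refine tendsto_lintegral_filter_of_dominated_convergence
      (fun x => ENNReal.ofReal (v x ^ 2)) (.of_forall fun η => ?_)
      (.of_forall fun η => .of_forall fun x => ENNReal.ofReal_le_ofReal
        (sq_le_sq.2 (abs_softThreshold_le η (v x)))) ?_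
      (.of_forall fun x => ENNReal.tendsto_ofReal ((tendsto_softThreshold (v x)).pow 2))
    · have := (contDiff_softThreshold η).continuous
      fun_prop
    · exact ((hvc.pow 2).integrableOn_Icc.mono_set Ioo_subset_Icc_self).lintegral_lt_top.ne
  refine le_of_tendsto (ENNReal.Tendsto.const_mul hlim (.inr ENNReal.ofReal_ne_top)) ?_
  filter_upwards [self_mem_nhdsWithin] with η hη using hle η hη

theorem IsStrictBarrier.ofReal_le_lam1 {ω F F' F'' : ℝ → ℝ} {μ : ℝ}
    (hF : IsStrictBarrier ω μ (π / 2) F F' F'') (hμ : 0 < μ) {P : PsiA}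
    (hω : IsModulusOfExpansion ω P.psi P.dom) :
    ENNReal.ofReal μ ≤ lam1 (-(π / 2)) (π / 2) P.qM :=
  le_lam1_of_forall_mul_le fun _ hv => hF.mul_lintegral_sq_le_dirEnergy hμ hω hv

end Eigenvalue

section SineBarrier

lemma isStrictBarrier_comp_sin {g g' g'' κ : ℝ → ℝ} {μ : ℝ} (hg : ∀ s, HasDerivAt g (g' s) s)
    (hg' : ∀ s, HasDerivAt g' (g'' s) s) (hpos : ∀ s, 0 ≤ s → s < 1 → 0 < g s)
    (hpos' : ∀ s, 0 < s → s < 1 → 0 < g' s)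
    (hstrict : ∀ t, 0 < t → t < π / 2 →
      (1 - sin t ^ 2) * g'' (sin t) - 3 * sin t * g' (sin t) + μ * g (sin t) <
        κ t * (g' (sin t) * cos t)) :
    IsStrictBarrier (fun t => 2 * tan t + κ t) μ (π / 2) (fun t => g (sin t))
      (fun t => g' (sin t) * cos t) (fun t => g'' (sin t) * cos t ^ 2 - g' (sin t) * sin t) where
  hasDerivAt t := (hg (sin t)).comp t (hasDerivAt_sin t)
  hasDerivAt_deriv t := by
    refine (((hg' (sin t)).comp t (hasDerivAt_sin t)).mul (hasDerivAt_cos t)).congr_deriv ?_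
    simp only [Function.comp_apply]
    ring
  pos t h0 hT := hpos _ (sin_nonneg_of_nonneg_of_le_pi h0 (by linarith [pi_pos])) (by
    simpa using sin_lt_sin_of_lt_of_le_pi_div_two (by linarith) le_rfl hT)
  deriv_pos t h0 hT := by
    have hcos : 0 < cos t := cos_pos_of_mem_Ioo ⟨by linarith, hT⟩
    have hsin : 0 < sin t := sin_pos_of_pos_of_lt_pi h0 (by linarith)
    refine mul_pos (hpos' _ hsin ?_) hcos
    nlinarith [sin_sq_add_cos_sq t]
  strict t h0 hT := by
    have hcos : 0 < cos t := cos_pos_of_mem_Ioo ⟨by linarith, hT⟩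
    have htan : tan t * cos t = sin t := tan_mul_cos hcos.ne'
    calc _ = (1 - sin t ^ 2) * g'' (sin t) - 3 * sin t * g' (sin t) + μ * g (sin t) -
          κ t * (g' (sin t) * cos t) := by
          rw [← cos_sq']
          linear_combination (-2 * g' (sin t)) * htan
      _ < 0 := sub_neg.2 (hstrict t h0 hT)

/-- The profile of the barrier as a function of `s = sin t`. The leading term `s` corresponds to
the eigenvalue `3`, the quintic term raises the eigenvalue by an amount of order `ε`, and the term
in `τ` makes all inequalities strict. -/
def sineProfile (ε τ s : ℝ) : ℝ :=
  s + ε * (-s ^ 3 + 21 / 40 * s ^ 5) + τ * (1 - 2 * s ^ 2)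

/-- The derivative of `sineProfile ε τ`. -/
def sineProfileDeriv (ε τ s : ℝ) : ℝ :=
  1 + ε * (-3 * s ^ 2 + 21 / 8 * s ^ 4) - 4 * τ * s

/-- The second derivative of `sineProfile ε τ`. -/
def sineProfileDerivTwo (ε τ s : ℝ) : ℝ :=
  ε * (-6 * s + 21 / 2 * s ^ 3) - 4 * τ

variable {ε τ σ s t : ℝ}

lemma hasDerivAt_sineProfile (ε τ s : ℝ) :
    HasDerivAt (sineProfile ε τ) (sineProfileDeriv ε τ s) s := by
  unfold sineProfile sineProfileDeriv
  refine (((hasDerivAt_id s).add ((((hasDerivAt_pow 3 s).neg).add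
    ((hasDerivAt_pow 5 s).const_mul (21 / 40))).const_mul ε)).add
    ((((hasDerivAt_pow 2 s).const_mul 2).const_sub 1).const_mul τ)).congr_deriv ?_
  push_cast
  ring

lemma hasDerivAt_sineProfileDeriv (ε τ s : ℝ) :
    HasDerivAt (sineProfileDeriv ε τ) (sineProfileDerivTwo ε τ s) s := by
  unfold sineProfileDeriv sineProfileDerivTwo
  refine ((((((hasDerivAt_pow 2 s).const_mul (-3)).add
    ((hasDerivAt_pow 4 s).const_mul (21 / 8))).const_mul ε).const_add 1).sub
    ((hasDerivAt_id s).const_mul (4 * τ))).congr_deriv ?_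
  push_cast
  ring

lemma sineProfile_ode (ε τ s : ℝ) :
    (1 - s ^ 2) * sineProfileDerivTwo ε τ s - 3 * s * sineProfileDeriv ε τ s +
        3 * sineProfile ε τ s =
      ε * s * (-6 + 45 / 2 * s ^ 2 - 84 / 5 * s ^ 4) + τ * (-1 + 10 * s ^ 2) := by
  unfold sineProfile sineProfileDeriv sineProfileDerivTwo
  ring

lemma sineProfile_le (hε : 0 ≤ ε) (hτ : 0 ≤ τ) (hs₀ : 0 ≤ s) (hs₁ : s ≤ 1) :
    sineProfile ε τ s ≤ s + τ := by
  have hquintic : -s ^ 3 + 21 / 40 * s ^ 5 ≤ 0 := by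
    nlinarith [pow_nonneg hs₀ 3, pow_le_pow_of_le_one hs₀ hs₁ (by norm_num : 3 ≤ 5)]
  have hquad : 1 - 2 * s ^ 2 ≤ 1 := by nlinarith
  unfold sineProfile
  nlinarith [mul_nonneg hε (neg_nonneg.2 hquintic), mul_le_mul_of_nonneg_left hquad hτ]

lemma le_sineProfile (hε₀ : 0 ≤ ε) (hε₁ : ε ≤ 1 / 100) (hτ₀ : 0 ≤ τ) (hτ₁ : τ ≤ 1 / 100)
    (hs₀ : 0 ≤ s) (hs₁ : s ≤ 1) : 49 / 50 * s ≤ sineProfile ε τ s := by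
  have hquintic : -s ≤ -s ^ 3 + 21 / 40 * s ^ 5 := by
    have := pow_le_of_le_one hs₀ hs₁ (by norm_num : 3 ≠ 0)
    linarith [pow_nonneg hs₀ 5]
  have hquad : -s ≤ 1 - 2 * s ^ 2 := by nlinarith
  unfold sineProfile
  nlinarith [mul_le_mul_of_nonneg_left hquintic hε₀, mul_le_mul_of_nonneg_left hquad hτ₀,
    mul_nonneg hs₀ (sub_nonneg.2 hε₁), mul_nonneg hs₀ (sub_nonneg.2 hτ₁)]

lemma le_sineProfileDeriv (hε₀ : 0 ≤ ε) (hε₁ : ε ≤ 1 / 100) (hτ₀ : 0 ≤ τ) (hτ₁ : τ ≤ 1 / 100)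
    (hs₀ : 0 ≤ s) (hs₁ : s ≤ 1) : 9 / 10 ≤ sineProfileDeriv ε τ s := by
  have hquartic : -3 ≤ -3 * s ^ 2 + 21 / 8 * s ^ 4 := by
    linarith [pow_nonneg hs₀ 4, pow_le_one₀ (n := 2) hs₀ hs₁]
  have hτs : τ * s ≤ τ := mul_le_of_le_one_right hτ₀ hs₁
  unfold sineProfileDeriv
  nlinarith [mul_le_mul_of_nonneg_left hquartic hε₀]

lemma sineProfile_supersolution (hε₀ : 0 ≤ ε) (hε₁ : ε ≤ 1 / 100) (hσ₀ : 0 < σ) (hσ₁ : σ ≤ 1)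
    (hs₀ : 0 ≤ s) (hs₁ : s ≤ 1) :
    (1 - s ^ 2) * sineProfileDerivTwo ε (σ / 100) s - 3 * s * sineProfileDeriv ε (σ / 100) s +
        (3 + ε / 100 - σ) * sineProfile ε (σ / 100) s <
      ε * s * (-599 / 100 + 45 / 2 * s ^ 2 - 84 / 5 * s ^ 4) := by
  have hode := sineProfile_ode ε (σ / 100) s
  have hle := sineProfile_le hε₀ (by positivity : 0 ≤ σ / 100) hs₀ hs₁
  have hge := le_sineProfile hε₀ hε₁ (by positivity) (by linarith : σ / 100 ≤ 1 / 100) hs₀ hs₁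
  have hσs : σ * s ^ 2 ≤ σ * s := by gcongr; exact pow_le_of_le_one hs₀ hs₁ two_ne_zero
  have hεσ : ε * σ ≤ σ / 100 := by nlinarith
  have hupper := mul_le_mul_of_nonneg_left hle hε₀
  have hlower := mul_le_mul_of_nonneg_left hge hσ₀.le
  linarith [mul_nonneg hσ₀.le hs₀]

theorem isStrictBarrier_sineProfile (hε₀ : 0 ≤ ε) (hε₁ : ε ≤ 1 / 100) (hσ₀ : 0 < σ)
    (hσ₁ : σ ≤ 1) :
    IsStrictBarrier (fun t => 2 * tan t + if 3 / 5 ≤ t then 10 * ε else 0) (3 + ε / 100 - σ)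
      (π / 2) (fun t => sineProfile ε (σ / 100) (sin t))
      (fun t => sineProfileDeriv ε (σ / 100) (sin t) * cos t)
      (fun t => sineProfileDerivTwo ε (σ / 100) (sin t) * cos t ^ 2 -
        sineProfileDeriv ε (σ / 100) (sin t) * sin t) := by
  have hτ₀ : 0 ≤ σ / 100 := by positivity
  have hτ₁ : σ / 100 ≤ 1 / 100 := by linarith
  refine isStrictBarrier_comp_sin (hasDerivAt_sineProfile _ _) (hasDerivAt_sineProfileDeriv _ _)
    (fun s hs₀ hs₁ => ?_) (fun s hs₀ hs₁ => ?_) fun t ht₀ ht₁ => ?_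
  · obtain rfl | hs := hs₀.eq_or_lt
    · simpa [sineProfile] using hσ₀
    · linarith [le_sineProfile hε₀ hε₁ hτ₀ hτ₁ hs₀ hs₁.le]
  · linarith [le_sineProfileDeriv hε₀ hε₁ hτ₀ hτ₁ hs₀.le hs₁.le]
  · have hsin : 0 < sin t := sin_pos_of_pos_of_lt_pi ht₀ (by linarith)
    have hcos : 0 < cos t := cos_pos_of_mem_Ioo ⟨by linarith, ht₁⟩
    refine (sineProfile_supersolution hε₀ hε₁ hσ₀ hσ₁ hsin.le (sin_le_one t)).trans_le ?_
    have hεsin : 0 ≤ ε * sin t := by positivity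
    split_ifs with ht
    · have hpoly : -599 / 100 + 45 / 2 * sin t ^ 2 - 84 / 5 * sin t ^ 4 ≤ 9 * cos t := by
        have hcos_sq : cos t ^ 2 ≤ cos t := pow_le_of_le_one hcos.le (cos_le_one t) two_ne_zero
        rw [cos_sq'] at hcos_sq
        nlinarith [sq_nonneg (sin t ^ 2 - 15 / 16)]
      calc ε * sin t * (-599 / 100 + 45 / 2 * sin t ^ 2 - 84 / 5 * sin t ^ 4)
          ≤ ε * sin t * (9 * cos t) := by gcongr
        _ ≤ ε * 1 * (9 * cos t) := by gcongr; exact sin_le_one t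
        _ = 10 * ε * (9 / 10 * cos t) := by ring
        _ ≤ 10 * ε * (sineProfileDeriv ε (σ / 100) (sin t) * cos t) := by
          gcongr
          exact le_sineProfileDeriv hε₀ hε₁ hτ₀ hτ₁ hsin.le (sin_le_one t)
    · have hpoly : -599 / 100 + 45 / 2 * sin t ^ 2 - 84 / 5 * sin t ^ 4 ≤ 0 := by
        have hsin_le : sin t ≤ 3 / 5 := (sin_le ht₀.le).trans (not_le.1 ht).le
        have hsin_sq : sin t ^ 2 ≤ 9 / 25 := by nlinarith
        nlinarith [sq_nonneg (sin t ^ 2 - 9 / 25)]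
      simpa using mul_nonpos_of_nonneg_of_nonpos hεsin hpoly

theorem ofReal_le_lam1_of_isModulusOfExpansion {P : PsiA} (hε₀ : 0 ≤ ε) (hε₁ : ε ≤ 1 / 100)
    (hω : IsModulusOfExpansion (fun t => 2 * tan t + if 3 / 5 ≤ t then 10 * ε else 0)
      P.psi P.dom) :
    ENNReal.ofReal (3 + ε / 100) ≤ lam1 (-(π / 2)) (π / 2) P.qM := by
  have hlim : Tendsto (fun σ => ENNReal.ofReal (3 + ε / 100 - σ)) (nhdsWithin 0 (Ioi 0))
      (nhds (ENNReal.ofReal (3 + ε / 100))) :=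
    tendsto_nhdsWithin_of_tendsto_nhds <|
      (ENNReal.continuous_ofReal.comp (continuous_const.sub continuous_id)).tendsto' 0 _ (by simp)
  refine le_of_tendsto hlim ?_
  filter_upwards [Ioo_mem_nhdsGT one_pos] with σ hσ
  exact (isStrictBarrier_sineProfile hε₀ hε₁ hσ.1 hσ.2.le).ofReal_le_lam1
    (by linarith [hσ.2]) hω

end SineBarrier

section LogConcave

lemma concaveOn_log_of_concaveOn_rpow {E : Type*} [AddCommMonoid E] [Module ℝ E] {S : Set E}
    {h : E → ℝ} {r : ℝ} (hr : 0 < r) (hpos : ∀ x ∈ S, 0 < h x)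
    (hh : ConcaveOn ℝ S fun x => h x ^ r) : ConcaveOn ℝ S fun x => log (h x) := by
  have hpow : ∀ x ∈ S, 0 < h x ^ r := fun x hx => rpow_pos_of_pos (hpos x hx) r
  have hlog : ConcaveOn ℝ S fun x => log (h x ^ r) := by
    refine ⟨hh.1, fun x hx y hy α β hα hβ hαβ => ?_⟩
    have hcomb : 0 < α • h x ^ r + β • h y ^ r :=
      convex_Ioi (0 : ℝ) (hpow x hx) (hpow y hy) hα hβ hαβ
    exact (strictConcaveOn_log_Ioi.concaveOn.2 (hpow x hx) (hpow y hy) hα hβ hαβ).trans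
      (log_le_log hcomb (hh.2 hx hy hα hβ hαβ))
  refine (hlog.smul (inv_nonneg.2 hr.le)).congr fun x hx => ?_
  simp only [log_rpow (hpos x hx), smul_eq_mul, inv_mul_cancel_left₀ hr.ne']

lemma exists_differentiableAt_of_concaveOn {E : Type*} [NormedAddCommGroup E] [NormedSpace ℝ E]
    [FiniteDimensional ℝ E] {U : Set E} {G : E → ℝ} (hU : IsOpen U) (hne : U.Nonempty)
    (hG : ConcaveOn ℝ U G) : ∃ z ∈ U, DifferentiableAt ℝ G z := by
  borelize E
  obtain ⟨x, hx⟩ := hne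
  obtain ⟨C, V, hV, hLip⟩ := hG.locallyLipschitzOn hU hx
  rw [hU.nhdsWithin_eq hx] at hV
  obtain ⟨z, hz, hdiff⟩ := (Measure.dense_of_ae
    (hLip.ae_differentiableWithinAt_of_mem (μ := Measure.addHaar))).exists_mem_open
    (isOpen_interior.inter hU) ⟨x, mem_interior_iff_mem_nhds.2 hV, hx⟩
  exact ⟨z, hdiff.2, (hz (interior_subset hdiff.1)).differentiableAt
    (mem_interior_iff_mem_nhds.1 hdiff.1)⟩

lemma deriv_le_deriv_of_concaveOn {S : Set ℝ} {G : ℝ → ℝ} {x y : ℝ} (hG : ConcaveOn ℝ S G)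
    (hx : x ∈ S) (hy : y ∈ S) (hxy : x ≤ y) (hGx : DifferentiableAt ℝ G x)
    (hGy : DifferentiableAt ℝ G y) : deriv G y ≤ deriv G x := by
  obtain rfl | hlt := hxy.eq_or_lt
  · rfl
  · exact (hG.deriv_le_slope hx hy hlt hGy).trans (hG.slope_le_deriv hx hy hlt hGx)

variable {h : ℝ → ℝ} {a b s t x y : ℝ}

lemma le_max_of_affine (haff : ∀ z ∈ Icc a b, h z = s * z + t) (hx : x ∈ Icc a b) :
    h x ≤ max (h a) (h b) := by
  have hab : a ≤ b := hx.1.trans hx.2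
  rw [haff x hx, haff a (left_mem_Icc.2 hab), haff b (right_mem_Icc.2 hab)]
  obtain hs | hs := le_total 0 s
  · exact le_max_of_le_right (by gcongr; exact hx.2)
  · exact le_max_of_le_left (by gcongr ?_ + _; exact mul_le_mul_of_nonpos_left hx.1 hs)

lemma hasDerivAt_log_of_affine (haff : ∀ z ∈ Icc a b, h z = s * z + t) (hx : x ∈ Ioo a b)
    (hpos : 0 < h x) : HasDerivAt (fun z => log (h z)) (s / h x) x := by
  have hlin : HasDerivAt (fun z => s * z + t) s x := by
    simpa using ((hasDerivAt_id x).const_mul s).add_const t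
  refine (hlin.congr_of_eventuallyEq ?_).log hpos.ne'
  filter_upwards [Icc_mem_nhds hx.1 hx.2] with z hz using haff z hz

lemma le_div_sub_div_of_affine (haff : ∀ z ∈ Icc a b, h z = s * z + t)
    (hpos : ∀ z ∈ Icc a b, 0 < h z) (hab : a < b) (hx : x ∈ Icc a b) (hy : y ∈ Icc a b)
    (hxy : x ≤ y) :
    (1 - min (h a) (h b) / max (h a) (h b)) ^ 2 * (y - x) / (b - a) ^ 2 ≤ s / h x - s / h y := by
  have ha := left_mem_Icc.2 hab.le
  have hb := right_mem_Icc.2 hab.le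
  have hmax : 0 < max (h a) (h b) := lt_max_of_lt_left (hpos a ha)
  have hosc : (max (h a) (h b) - min (h a) (h b)) ^ 2 = s ^ 2 * (b - a) ^ 2 := by
    rw [max_sub_min_eq_abs, sq_abs, haff a ha, haff b hb]
    ring
  have hba : b - a ≠ 0 := (sub_pos.2 hab).ne'
  have hx₀ := hpos x hx
  have hy₀ := hpos y hy
  calc (1 - min (h a) (h b) / max (h a) (h b)) ^ 2 * (y - x) / (b - a) ^ 2
      = s ^ 2 * (y - x) / (max (h a) (h b) * max (h a) (h b)) := by
        rw [one_sub_div hmax.ne', div_pow, hosc]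
        field_simp
    _ ≤ s ^ 2 * (y - x) / (h x * h y) := by
        have := sub_nonneg.2 hxy
        gcongr
        exacts [le_max_of_affine haff hx, le_max_of_affine haff hy]
    _ = s / h x - s / h y := by
        rw [div_sub_div _ _ hx₀.ne' hy₀.ne', haff x hx, haff y hy]
        ring

lemma le_deriv_log_sub_deriv_log_of_affine {S : Set ℝ} {p q : ℝ}
    (hG : ConcaveOn ℝ S fun z => log (h z)) (habS : Icc a b ⊆ S) (hpos : ∀ z ∈ Icc a b, 0 < h z)
    (haff : ∀ z ∈ Icc a b, h z = s * z + t) (hx : x ∈ S) (hy : y ∈ S) (hp : p ∈ Ioo a b)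
    (hq : q ∈ Ioo a b) (hxp : x ≤ p) (hpq : p ≤ q) (hqy : q ≤ y)
    (hGx : DifferentiableAt ℝ (fun z => log (h z)) x)
    (hGy : DifferentiableAt ℝ (fun z => log (h z)) y) :
    (1 - min (h a) (h b) / max (h a) (h b)) ^ 2 * (q - p) / (b - a) ^ 2 ≤
      deriv (fun z => log (h z)) x - deriv (fun z => log (h z)) y := by
  have hp_icc := Ioo_subset_Icc_self hp
  have hq_icc := Ioo_subset_Icc_self hq
  have hGp := hasDerivAt_log_of_affine haff hp (hpos p hp_icc)
  have hGq := hasDerivAt_log_of_affine haff hq (hpos q hq_icc)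
  calc (1 - min (h a) (h b) / max (h a) (h b)) ^ 2 * (q - p) / (b - a) ^ 2
      ≤ s / h p - s / h q :=
        le_div_sub_div_of_affine haff hpos (hp.1.trans hp.2) hp_icc hq_icc hpq
    _ = deriv (fun z => log (h z)) p - deriv (fun z => log (h z)) q := by rw [hGp.deriv, hGq.deriv]
    _ ≤ deriv (fun z => log (h z)) x - deriv (fun z => log (h z)) y :=
        sub_le_sub
          (deriv_le_deriv_of_concaveOn hG hx (habS hp_icc) hxp hGx hGp.differentiableAt)
          (deriv_le_deriv_of_concaveOn hG (habS hq_icc) hy hqy hGq.differentiableAt hGy)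

lemma le_deriv_log_sub_deriv_log {S : Set ℝ} (hS : S ⊆ Ioo (-(π / 2)) (π / 2))
    (hG : ConcaveOn ℝ S fun z => log (h z)) (hsub : Ioo (-(π / 8)) (π / 8) ⊆ Icc a b)
    (habS : Icc a b ⊆ S) (hpos : ∀ z ∈ Icc a b, 0 < h z)
    (haff : ∀ z ∈ Icc a b, h z = s * z + t) (hx : x ∈ S) (hy : y ∈ S) (hxy : 119 / 100 ≤ y - x)
    (hGx : DifferentiableAt ℝ (fun z => log (h z)) x)
    (hGy : DifferentiableAt ℝ (fun z => log (h z)) y) :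
    (1 - min (h a) (h b) / max (h a) (h b)) ^ 2 / (200 * π ^ 2) ≤
      deriv (fun z => log (h z)) x - deriv (fun z => log (h z)) y := by
  have hsub' : Icc (-(39 / 100)) (39 / 100) ⊆ Ioo a b := by
    rw [← interior_Icc]
    refine Subset.trans ?_ (interior_maximal hsub isOpen_Ioo)
    exact Icc_subset_Ioo (by linarith [pi_gt_d2]) (by linarith [pi_gt_d2])
  set p := max x (-(39 / 100)) with hp
  set q := min y (39 / 100) with hq
  have hpq : p + 1 / 200 ≤ q := by
    have := (hS hx).1
    have := (hS hy).2
    rw [hp, hq, ← max_add_add_right]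
    refine max_le (le_min ?_ ?_) (le_min ?_ ?_) <;> linarith [pi_lt_d2]
  have hp_mem : p ∈ Ioo a b := hsub' ⟨le_max_right _ _, by linarith [min_le_right y (39 / 100)]⟩
  have hq_mem : q ∈ Ioo a b := hsub' ⟨by linarith [le_max_right x (-(39 / 100))], min_le_right _ _⟩
  have hab : a < b := hp_mem.1.trans hp_mem.2
  have hba : b - a ≤ π := by
    linarith [(hS (habS (left_mem_Icc.2 hab.le))).1, (hS (habS (right_mem_Icc.2 hab.le))).2]
  calc (1 - min (h a) (h b) / max (h a) (h b)) ^ 2 / (200 * π ^ 2)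
      = (1 - min (h a) (h b) / max (h a) (h b)) ^ 2 * (1 / 200) / π ^ 2 := by ring
    _ ≤ (1 - min (h a) (h b) / max (h a) (h b)) ^ 2 * (q - p) / (b - a) ^ 2 := by
        have := sub_pos.2 hab
        have : 0 ≤ q - p := by linarith
        gcongr
        linarith
    _ ≤ deriv (fun z => log (h z)) x - deriv (fun z => log (h z)) y :=
        le_deriv_log_sub_deriv_log_of_affine hG habS hpos haff hx hy hp_mem hq_mem
          (le_max_left _ _) (by linarith) (min_le_left _ _) hGx hGy

lemma tan_le_of_forall_tan_sub_le {u δ₀ A : ℝ} (hu : cos u ≠ 0) (hδ₀ : 0 < δ₀)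
    (h : ∀ δ ∈ Ioo 0 δ₀, tan (u - δ) ≤ A) : tan u ≤ A := by
  have hcont : ContinuousAt (fun δ => tan (u - δ)) 0 :=
    ContinuousAt.comp (g := tan) (continuousAt_tan.2 (by simpa using hu)) (by fun_prop)
  have hlim := hcont.tendsto.mono_left (nhdsWithin_le_nhds (s := Ioi 0))
  rw [sub_zero] at hlim
  refine le_of_tendsto hlim ?_
  filter_upwards [Ioo_mem_nhdsGT hδ₀] with δ hδ using h δ hδ

lemma PsiA.two_mul_tan_add_le {P Pf : PsiA} {G : ℝ → ℝ} {c ℓ : ℝ} (hdom : Pf.dom = P.dom)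
    (hG : ConcaveOn ℝ P.dom G)
    (hpsi : ∀ z ∈ interior P.dom, P.psi z = Pf.psi z + -deriv G z / 2) (hℓ : 0 ≤ ℓ)
    (hgain : ∀ ⦃x⦄, x ∈ P.dom → ∀ ⦃y⦄, y ∈ P.dom → ℓ ≤ y - x → DifferentiableAt ℝ G x →
      DifferentiableAt ℝ G y → 2 * c ≤ deriv G x - deriv G y)
    (hx : x ∈ P.dom) (hy : y ∈ P.dom) (hxy : ℓ < y - x) :
    2 * tan ((y - x) / 2) + c ≤ P.psi y - P.psi x := by
  have hxπ := P.domSub hx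
  have hyπ := P.domSub hy
  have hIoo : Ioo x y ⊆ interior P.dom :=
    interior_maximal (Ioo_subset_Icc_self.trans (P.domConn.out hx hy)) isOpen_Ioo
  have hdiff : ∀ ⦃u v⦄, u < v → Ioo u v ⊆ Ioo x y → ∃ z ∈ Ioo u v, DifferentiableAt ℝ G z :=
    fun u v huv hsub => exists_differentiableAt_of_concaveOn isOpen_Ioo (nonempty_Ioo.2 huv)
      (hG.subset ((hsub.trans hIoo).trans interior_subset) (convex_Ioo u v))
  have hcos : cos ((y - x) / 2) ≠ 0 :=
    (cos_pos_of_mem_Ioo ⟨by linarith [pi_pos], by linarith [hxπ.1, hyπ.2]⟩).ne'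
  suffices tan ((y - x) / 2) ≤ (P.psi y - P.psi x - c) / 2 by linarith
  refine tan_le_of_forall_tan_sub_le hcos (show 0 < (y - x - ℓ) / 2 by linarith)
    fun δ ⟨hδ₀, hδ₁⟩ => ?_
  obtain ⟨x', hx', hGx'⟩ := hdiff (show x < x + δ by linarith)
    (Ioo_subset_Ioo_right (by linarith))
  obtain ⟨y', hy', hGy'⟩ := hdiff (show y - δ < y by linarith)
    (Ioo_subset_Ioo_left (by linarith))
  have hx'_int := hIoo ⟨hx'.1, by linarith [hx'.2]⟩
  have hy'_int := hIoo ⟨by linarith [hy'.1], hy'.2⟩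
  have hx'_dom := interior_subset hx'_int
  have hy'_dom := interior_subset hy'_int
  have hdist : ℓ < y' - x' := by linarith [hx'.2, hy'.1]
  have hgap := Pf.gap (hdom ▸ hx'_dom) (hdom ▸ hy'_dom) (by linarith)
  have hmono_x := P.mono hx hx'_dom hx'.1.le
  have hmono_y := P.mono hy'_dom hy hy'.2.le
  have htan : tan ((y - x) / 2 - δ) ≤ tan ((y' - x') / 2) := by
    refine strictMonoOn_tan.monotoneOn ⟨?_, ?_⟩ ⟨?_, ?_⟩ ?_ <;>
      linarith [hx'.1, hx'.2, hy'.1, hy'.2, hxπ.1, hyπ.2, pi_pos]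
  linarith [hgain hx'_dom hy'_dom hdist.le hGx' hGy', hpsi x' hx'_int, hpsi y' hy'_int]

end LogConcave

theorem ofReal_le_lam1_of_affine {h : ℝ → ℝ} {a b s t : ℝ} {P Pf : PsiA}
    (hdom : Pf.dom = P.dom) (hsub : Ioo (-(π / 8)) (π / 8) ⊆ Icc a b) (hab : Icc a b ⊆ P.dom)
    (hpos : ∀ x ∈ Icc a b, 0 < h x) (hG : ConcaveOn ℝ P.dom fun x => log (h x))
    (haff : ∀ x ∈ Icc a b, h x = s * x + t)
    (hpsi : ∀ x ∈ interior P.dom,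
      P.psi x = Pf.psi x + -deriv (fun y => log (h y)) x / 2) :
    ENNReal.ofReal (3 + (1 - min (h a) (h b) / max (h a) (h b)) ^ 2 / (400000 * π ^ 2)) ≤
      lam1 (-(π / 2)) (π / 2) P.qM := by
  have h₀ : (0 : ℝ) ∈ Icc a b := hsub ⟨by linarith [pi_pos], by linarith [pi_pos]⟩
  have ha : 0 < h a := hpos a (left_mem_Icc.2 (h₀.1.trans h₀.2))
  have hb : 0 < h b := hpos b (right_mem_Icc.2 (h₀.1.trans h₀.2))
  set r := min (h a) (h b) / max (h a) (h b)
  have hr₀ : 0 ≤ r := div_nonneg (le_min ha.le hb.le) (le_max_of_le_left ha.le)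
  have hr₁ : r ≤ 1 := div_le_one_of_le₀ min_le_max (le_max_of_le_left ha.le)
  set ε := (1 - r) ^ 2 / (4000 * π ^ 2) with hε
  have hε₁ : ε ≤ 1 / 100 := by
    rw [hε, div_le_iff₀ (by positivity)]
    nlinarith [pi_gt_three]
  have hbound : 3 + (1 - r) ^ 2 / (400000 * π ^ 2) = 3 + ε / 100 := by
    rw [hε]
    ring
  rw [hbound]
  refine ofReal_le_lam1_of_isModulusOfExpansion (by positivity) hε₁ fun x hx y hy hxy => ?_
  beta_reduce
  split_ifs with hdist
  · refine PsiA.two_mul_tan_add_le (ℓ := 119 / 100) hdom hG hpsi (by norm_num)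
      (fun x' hx' y' hy' hxy' hGx' hGy' => ?_) hx hy (by linarith)
    calc 2 * (10 * ε) = (1 - r) ^ 2 / (200 * π ^ 2) := by
          rw [hε]
          ring
      _ ≤ _ := le_deriv_log_sub_deriv_log P.domSub hG hsub hab hpos haff hx' hy' hxy' hGx' hGy'
  · simpa using P.gap hx hy hxy

theorem refined_lower_bound_affine_profile_general :
    ∃ K : ℝ, 0 < K ∧ ∀ (h : ℝ → ℝ) (a b : ℝ) (P Pf : PsiA), Pf.dom = P.dom →
      Ioo (-(π / 8)) (π / 8) ⊆ Icc a b → Icc a b ⊆ P.dom → (∀ x ∈ Icc a b, 0 < h x) →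
      ConcaveOn ℝ P.dom (fun x => log (h x)) →
      (∃ s t : ℝ, ∀ x ∈ Icc a b, h x = s * x + t) →
      (∀ x ∈ interior P.dom, P.psi x = Pf.psi x + -deriv (fun y => log (h y)) x / 2) →
      3 + ENNReal.ofReal (8 * K / π ^ 2 * (1 - min (h a) (h b) / max (h a) (h b)) ^ 2) ≤
        lam1 (-(π / 2)) (π / 2) P.qM := by
  refine ⟨1 / 3200000, by norm_num, ?_⟩
  rintro h a b P Pf hdom hsub hab hpos hG ⟨s, t, haff⟩ hpsi
  refine le_trans (le_of_eq ?_) (ofReal_le_lam1_of_affine hdom hsub hab hpos hG haff hpsi)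
  rw [ENNReal.ofReal_add (by norm_num) (by positivity), ENNReal.ofReal_ofNat]
  congr 2
  ring

/-- Theorem 2.8 (ii) / `t:1dextra` (ii): there exists an absolute constant
`K > 0` such that the following holds. Let `q = ψ' + ψ²` with `ψ ∈ 𝒜(I_π)` of the form
`ψ = f + g/2`, where `f ∈ 𝒜(I_π)` with `dom f = I_d` (`d ≤ π`), and `g = -(log h)'` on `I_d`
for some `(1/m)`-concave function `h`, affine on an interval `[a,b]` with
`I_{π/4} ⊆ [a,b] ⊆ I_d`. If `λ₁(I_d, q) ≤ 7`, then
`λ₁(I_d, q) ≥ 3 + (8K/(mπ²))·(1 - min{h(a),h(b)}/max{h(a),h(b)})²`. -/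
theorem refined_lower_bound_affine_profile :
    ∃ K : ℝ, 0 < K ∧
      ∀ d : ℝ, 0 < d → d ≤ π →
        ∀ m : ℕ, 0 < m →
          ∀ (h : ℝ → ℝ) (a b : ℝ),
            Ioo (-(π / 8)) (π / 8) ⊆ Icc a b →
            Icc a b ⊆ Ioo (-(d / 2)) (d / 2) →
            (∀ x ∈ Ioo (-(d / 2)) (d / 2), 0 < h x) →
            ConcaveOn ℝ (Ioo (-(d / 2)) (d / 2)) (fun x => h x ^ ((1 : ℝ) / m)) →
            (∃ s t : ℝ, ∀ x ∈ Icc a b, h x = s * x + t) →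
            ∀ P Pf : PsiA,
              P.dom = Ioo (-(d / 2)) (d / 2) →
              Pf.dom = Ioo (-(d / 2)) (d / 2) →
              (∀ x ∈ Ioo (-(d / 2)) (d / 2),
                P.psi x = Pf.psi x + (-(deriv (fun y => Real.log (h y)) x)) / 2) →
              lam1 (-(π / 2)) (π / 2) P.qM ≤ 7 →
              3 + ENNReal.ofReal (8 * K / (m * π ^ 2) *
                  (1 - min (h a) (h b) / max (h a) (h b)) ^ 2) ≤
                lam1 (-(π / 2)) (π / 2) P.qM := by
  obtain ⟨K, hK, hbound⟩ := refined_lower_bound_affine_profile_general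
  refine ⟨K, hK, fun d _ _ m hm h a b hsub hab hpos hconc haff P Pf hP hPf hpsi _ => ?_⟩
  have hG := concaveOn_log_of_concaveOn_rpow (by positivity) hpos hconc
  rw [← hP] at hab hpos hG hpsi
  refine le_trans ?_ (hbound h a b P Pf (hPf.trans hP.symm) hsub hab (fun x hx => hpos x (hab hx))
    hG haff fun x hx => hpsi x (interior_subset hx))
  gcongr
  exact le_mul_of_one_le_left (by positivity) (by exact_mod_cast hm)
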